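/- arXiv:math/0212391 — 9 statements merged into one kernel-verified Lean document; each statement's English description precedes it below -/
import Mathlib

section
/- Let X and Y be real Hilbert spaces, let a : X × X → ℝ be a bounded symmetric bilinear form that is positive semidefinite (a(τ,τ) ≥ 0 for all τ ∈ X) with |a(σ,τ)| ≤ A‖σ‖‖τ‖, and let b : X × Y → ℝ be a bounded bilinear form with |b(τ,v)| ≤ B‖τ‖‖v‖. Assume the two Brezzi stability conditions: (S1) there exists γ₁ > 0 such that a(τ,τ) ≥ γ₁‖τ‖² for every τ ∈ X satisfying b(τ,v) = 0 for all v ∈ Y; (S2) there exists γ₂ > 0 such that for every v ∈ Y there exists a nonzero τ ∈ X with b(τ,v) ≥ γ₂‖v‖‖τ‖. Then for every pair of bounded linear functionals f ∈ X* and g ∈ Y* there exists a unique pair (σ,u) ∈ X × Y satisfying a(σ,τ) + b(τ,u) = f(τ) for all τ ∈ X and b(σ,v) = g(v) for all v ∈ Y; moreover there is a constant c depending only on γ₁, γ₂, A and B such that ‖σ‖ + ‖u‖ ≤ c(‖f‖ + ‖g‖). -/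
theorem brz_lax {V : Type*} [NormedAddCommGroup V] [InnerProductSpace ℝ V] [CompleteSpace V]
    (T : V →L[ℝ] V →L[ℝ] ℝ) (hT : IsCoercive T) (f : V →L[ℝ] ℝ) : ∃ u, ∀ v, T u v = f v := by
  refine ⟨hT.continuousLinearEquivOfBilin.symm ((InnerProductSpace.toDual ℝ V).symm f), fun v => ?_⟩
  rw [← hT.continuousLinearEquivOfBilin_apply]
  simp

theorem brz_cancel {x y : ℝ} (hx : 0 ≤ x) (hy : 0 ≤ y) (h : x * x ≤ y * x) : x ≤ y := by
  rcases hx.eq_or_lt with h0 | h0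
  · rw [← h0]; exact hy
  · exact le_of_mul_le_mul_right h h0

theorem brz_closed {X Y : Type*}
    [NormedAddCommGroup X] [InnerProductSpace ℝ X] [CompleteSpace X]
    [NormedAddCommGroup Y] [InnerProductSpace ℝ Y] [CompleteSpace Y]
    {γ₂ : ℝ} (hγ₂ : 0 < γ₂) (S : Y →L[ℝ] X) (hS : ∀ v, γ₂ * ‖v‖ ≤ ‖S v‖) :
    IsClosed (S.range : Set X) := by
  have h : AntilipschitzWith (Real.toNNReal γ₂⁻¹) S := by
    refine ContinuousLinearMap.antilipschitz_of_bound S (fun v => ?_)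
    rw [Real.coe_toNNReal _ (by positivity), inv_mul_eq_div, le_div_iff₀ hγ₂, mul_comm]
    exact hS v
  have := h.isClosed_range S.uniformContinuous
  rw [LinearMap.coe_range]
  exact this

theorem brz_est {X Y : Type*}
    [NormedAddCommGroup X] [InnerProductSpace ℝ X] [CompleteSpace X]
    [NormedAddCommGroup Y] [InnerProductSpace ℝ Y] [CompleteSpace Y]
    {γ₁ γ₂ A : ℝ} (hγ₁ : 0 < γ₁) (hγ₂ : 0 < γ₂) (hA : 0 ≤ A)
    (a : X →L[ℝ] X →L[ℝ] ℝ) (S : Y →L[ℝ] X) (hS : ∀ v, γ₂ * ‖v‖ ≤ ‖S v‖)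
    (ha : ∀ σ τ, |a σ τ| ≤ A * ‖σ‖ * ‖τ‖)
    (hc : ∀ τ, (∀ v, inner ℝ (S v) τ = 0) → γ₁ * ‖τ‖ ^ 2 ≤ a τ τ)
    (f : X →L[ℝ] ℝ) (g : Y →L[ℝ] ℝ) (σ : X) (u : Y)
    (h1 : ∀ τ, a σ τ + inner ℝ (S u) τ = f τ) (h2 : ∀ v, inner ℝ (S v) σ = g v) :
    ‖σ‖ + ‖u‖ ≤ ((1 / γ₂ + (1 + A / γ₂) / γ₁) + (1 + A * (1 / γ₂ + (1 + A / γ₂) / γ₁)) / γ₂)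
      * (‖f‖ + ‖g‖) := by
  have hcl := brz_closed hγ₂ S hS
  have : CompleteSpace S.range := hcl.completeSpace_coe
  obtain ⟨s, hs, k, hk, hσ⟩ := S.range.exists_add_mem_mem_orthogonal σ
  obtain ⟨w, rfl⟩ := hs
  have hk' : ∀ v, inner ℝ (S v) k = 0 := fun v =>
    (Submodule.mem_orthogonal _ _).1 hk _ ⟨v, rfl⟩
  change σ = S w + k at hσ
  have e1 : γ₂ * ‖S w‖ ≤ ‖g‖ := by
    have q1 : ‖S w‖ * ‖S w‖ = g w := by
      rw [← h2 w, hσ, inner_add_right, hk', real_inner_self_eq_norm_mul_norm, add_zero]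
    have q2 : g w ≤ ‖g‖ * ‖w‖ := (le_abs_self _).trans (g.le_opNorm w)
    refine brz_cancel (by positivity) (by positivity) ?_
    have q3 := mul_le_mul_of_nonneg_left (hS w) (norm_nonneg g)
    nlinarith [mul_le_mul_of_nonneg_left q2 (sq_nonneg γ₂),
      mul_le_mul_of_nonneg_left q3 hγ₂.le]
  have e2 : γ₁ * ‖k‖ ≤ ‖f‖ + A * ‖S w‖ := by
    have q1 : a k k = f k - a (S w) k := by
      have := h1 k
      rw [hk', hσ, map_add, add_apply] at this
      linarith
    have q2 : f k ≤ ‖f‖ * ‖k‖ := (le_abs_self _).trans (f.le_opNorm k)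
    have q3 := (abs_le.1 (ha (S w) k)).1
    refine brz_cancel (by positivity) (by positivity) ?_
    have q4 := hc k hk'
    have q5 : γ₁ * ‖k‖ ^ 2 ≤ (‖f‖ + A * ‖S w‖) * ‖k‖ := by linarith
    nlinarith [mul_le_mul_of_nonneg_left q5 hγ₁.le]
  have e3 : γ₂ * ‖u‖ ≤ ‖f‖ + A * ‖σ‖ := by
    refine (hS u).trans (brz_cancel (by positivity) (by positivity) ?_)
    have q1 := h1 (S u)
    rw [real_inner_self_eq_norm_mul_norm] at q1
    have q2 : f (S u) ≤ ‖f‖ * ‖S u‖ := (le_abs_self _).trans (f.le_opNorm _)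
    have q3 := (abs_le.1 (ha σ (S u))).1
    linarith
  have e4 : ‖σ‖ ≤ ‖S w‖ + ‖k‖ := by rw [hσ]; exact norm_add_le _ _
  have hf := norm_nonneg f
  have hg := norm_nonneg g
  have r1 : ‖S w‖ ≤ 1 / γ₂ * (‖f‖ + ‖g‖) := by
    rw [one_div_mul_eq_div, le_div_iff₀ hγ₂]; linarith
  have r2 : ‖k‖ ≤ (1 + A / γ₂) / γ₁ * (‖f‖ + ‖g‖) := by
    rw [div_mul_eq_mul_div, le_div_iff₀ hγ₁]
    have := mul_le_mul_of_nonneg_left r1 hA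
    have e : A * (1 / γ₂ * (‖f‖ + ‖g‖)) = A / γ₂ * (‖f‖ + ‖g‖) := by ring
    linarith
  have r3 : ‖σ‖ ≤ (1 / γ₂ + (1 + A / γ₂) / γ₁) * (‖f‖ + ‖g‖) := by linarith
  generalize (1 / γ₂ + (1 + A / γ₂) / γ₁) = c1 at *
  have r4 : ‖u‖ ≤ (1 + A * c1) / γ₂ * (‖f‖ + ‖g‖) := by
    rw [div_mul_eq_mul_div, le_div_iff₀ hγ₂]
    have := mul_le_mul_of_nonneg_left r3 hA
    linarith
  linarith

theorem brz_ex {X Y : Type*}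
    [NormedAddCommGroup X] [InnerProductSpace ℝ X] [CompleteSpace X]
    [NormedAddCommGroup Y] [InnerProductSpace ℝ Y] [CompleteSpace Y]
    {γ₁ γ₂ : ℝ} (hγ₁ : 0 < γ₁) (hγ₂ : 0 < γ₂)
    (a : X →L[ℝ] X →L[ℝ] ℝ) (S : Y →L[ℝ] X) (hS : ∀ v, γ₂ * ‖v‖ ≤ ‖S v‖)
    (hc : ∀ τ, (∀ v, inner ℝ (S v) τ = 0) → γ₁ * ‖τ‖ ^ 2 ≤ a τ τ)
    (f : X →L[ℝ] ℝ) (g : Y →L[ℝ] ℝ) :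
    ∃ σ u, (∀ τ, a σ τ + inner ℝ (S u) τ = f τ) ∧ (∀ v, inner ℝ (S v) σ = g v) := by
  have hcl := brz_closed hγ₂ S hS
  have : CompleteSpace S.range := hcl.completeSpace_coe
  obtain ⟨w, hw⟩ := brz_lax ((innerSL ℝ).bilinearComp S S) ⟨γ₂ ^ 2, by positivity, fun v => by
    have := hS v
    simp only [ContinuousLinearMap.bilinearComp_apply, innerSL_apply_apply,
      real_inner_self_eq_norm_mul_norm]
    have := mul_le_mul this this (by positivity) (by positivity)
    nlinarith⟩ g
  simp only [ContinuousLinearMap.bilinearComp_apply, innerSL_apply_apply] at hw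
  let K := S.rangeᗮ
  have hK : ∀ k ∈ K, ∀ v, inner ℝ (S v) k = 0 := fun k hk v =>
    (Submodule.mem_orthogonal _ _).1 hk _ ⟨v, rfl⟩
  obtain ⟨k, hk⟩ := brz_lax (a.bilinearComp K.subtypeL K.subtypeL) ⟨γ₁, hγ₁, fun v => by
    have := hc v (hK v v.2)
    simp only [ContinuousLinearMap.bilinearComp_apply, Submodule.subtypeL_apply]
    rw [mul_assoc, ← sq]
    exact this⟩ ((f - a (S w)).comp K.subtypeL)
  have hm : (InnerProductSpace.toDual ℝ X).symm (f - a (S w + k)) ∈ S.range := by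
    rw [← S.range.orthogonal_orthogonal, Submodule.mem_orthogonal']
    intro τ hτ
    have := hk ⟨τ, hτ⟩
    rw [InnerProductSpace.toDual_symm_apply]
    simp at this ⊢
    linarith
  obtain ⟨u, hu⟩ := hm
  change S u = _ at hu
  refine ⟨S w + k, u, fun τ => ?_, fun v => ?_⟩
  · rw [hu, InnerProductSpace.toDual_symm_apply]; simp
  · rw [inner_add_right, hK k k.2, add_zero, real_inner_comm, hw]

/-- **Brezzi's theorem** on well-posedness of saddle-point problems. -/
theorem brezzi_saddle_point (γ₁ γ₂ A B : ℝ) (hγ₁ : 0 < γ₁) (hγ₂ : 0 < γ₂) :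
    ∃ c : ℝ, ∀ (X Y : Type)
      [NormedAddCommGroup X] [InnerProductSpace ℝ X] [CompleteSpace X]
      [NormedAddCommGroup Y] [InnerProductSpace ℝ Y] [CompleteSpace Y]
      (a : X → X → ℝ) (b : X → Y → ℝ),
      (∀ σ : X, IsLinearMap ℝ (a σ)) →
      (∀ τ : X, IsLinearMap ℝ (fun σ => a σ τ)) →
      (∀ σ τ : X, a σ τ = a τ σ) →
      (∀ τ : X, 0 ≤ a τ τ) →
      (∀ σ τ : X, |a σ τ| ≤ A * ‖σ‖ * ‖τ‖) →
      (∀ τ : X, IsLinearMap ℝ (b τ)) →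
      (∀ v : Y, IsLinearMap ℝ (fun τ => b τ v)) →
      (∀ (τ : X) (v : Y), |b τ v| ≤ B * ‖τ‖ * ‖v‖) →
      -- (S1)
      (∀ τ : X, (∀ v : Y, b τ v = 0) → γ₁ * ‖τ‖ ^ 2 ≤ a τ τ) →
      -- (S2)
      (∀ v : Y, ∃ τ : X, τ ≠ 0 ∧ γ₂ * ‖v‖ * ‖τ‖ ≤ b τ v) →
      ∀ (f : X →L[ℝ] ℝ) (g : Y →L[ℝ] ℝ),
        (∃! p : X × Y, (∀ τ : X, a p.1 τ + b τ p.2 = f τ) ∧ (∀ v : Y, b p.1 v = g v)) ∧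
        (∀ p : X × Y, (∀ τ : X, a p.1 τ + b τ p.2 = f τ) → (∀ v : Y, b p.1 v = g v) →
          ‖p.1‖ + ‖p.2‖ ≤ c * (‖f‖ + ‖g‖)) := by
  refine ⟨((1 / γ₂ + (1 + |A| / γ₂) / γ₁) +
    (1 + |A| * (1 / γ₂ + (1 + |A| / γ₂) / γ₁)) / γ₂), fun X Y _ _ _ _ _ _ a b a1 a2 _ _ ha b1 b2 hb s1 s2 f g => ?_⟩
  let aL : X →L[ℝ] X →L[ℝ] ℝ := LinearMap.mkContinuous₂
    (LinearMap.mk₂ ℝ a (fun x y z => (a2 z).map_add x y) (fun c x y => (a2 y).map_smul c x)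
      (fun x y z => (a1 x).map_add y z) (fun c x y => (a1 x).map_smul c y)) A ha
  let bL : Y →L[ℝ] X →L[ℝ] ℝ := LinearMap.mkContinuous₂
    (LinearMap.mk₂ ℝ (fun v τ => b τ v) (fun x y z => (b1 z).map_add x y)
      (fun c x y => (b1 y).map_smul c x)
      (fun x y z => (b2 x).map_add y z) (fun c x y => (b2 x).map_smul c y)) B
      (fun v τ => (hb τ v).trans (by linarith))
  let S : Y →L[ℝ] X := LinearMap.mkContinuous
    { toFun := fun v => (InnerProductSpace.toDual ℝ X).symm (bL v)
      map_add' := fun x y => by simp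
      map_smul' := fun x y => by simp } ‖bL‖ (fun v => by simpa using bL.le_opNorm v)
  have hSb : ∀ v τ, inner ℝ (S v) τ = b τ v := fun v τ => by
    change inner ℝ ((InnerProductSpace.toDual ℝ X).symm (bL v)) τ = _
    rw [InnerProductSpace.toDual_symm_apply]; rfl
  have haL : ∀ σ τ, aL σ τ = a σ τ := fun σ τ => rfl
  have hS : ∀ v, γ₂ * ‖v‖ ≤ ‖S v‖ := fun v => by
    obtain ⟨τ, h0, h⟩ := s2 v
    rw [← hSb] at h
    exact le_of_mul_le_mul_right (h.trans (real_inner_le_norm _ _)) (norm_pos_iff.2 h0)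
  have ha' : ∀ σ τ, |aL σ τ| ≤ |A| * ‖σ‖ * ‖τ‖ := fun σ τ => (ha σ τ).trans (by
    gcongr; exact le_abs_self A)
  have hc : ∀ τ, (∀ v, inner ℝ (S v) τ = 0) → γ₁ * ‖τ‖ ^ 2 ≤ aL τ τ := fun τ h =>
    s1 τ (fun v => by rw [← hSb]; exact h v)
  have est := fun f g σ u => brz_est hγ₁ hγ₂ (abs_nonneg A) aL S hS ha' hc f g σ u
  refine ⟨?_, fun p h1 h2 => est f g p.1 p.2 (fun τ => by rw [hSb]; exact h1 τ)
    (fun v => by rw [hSb]; exact h2 v)⟩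
  obtain ⟨σ, u, h1, h2⟩ := brz_ex hγ₁ hγ₂ aL S hS hc f g
  refine ⟨(σ, u), ⟨fun τ => by rw [← hSb]; exact h1 τ, fun v => by rw [← hSb]; exact h2 v⟩, ?_⟩
  rintro ⟨σ', u'⟩ ⟨h1', h2'⟩
  have := est 0 0 (σ' - σ) (u' - u) (fun τ => by
    have e1 := h1 τ
    have e2 := h1' τ
    rw [← hSb, ← haL] at e2
    simp only [map_sub, inner_sub_left, sub_apply, zero_apply]
    simp only at e2
    linarith) (fun v => by
    have e1 := h2 v
    have e2 := h2' v
    rw [← hSb] at e2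
    simp only [inner_sub_right, zero_apply]
    simp only at e2
    linarith)
  simp only [norm_zero, add_zero, mul_zero] at this
  have n1 := norm_nonneg (σ' - σ)
  have n2 := norm_nonneg (u' - u)
  have m1 : σ' - σ = 0 := norm_eq_zero.1 (by linarith)
  have m2 : u' - u = 0 := norm_eq_zero.1 (by linarith)
  rw [sub_eq_zero.1 m1, sub_eq_zero.1 m2]
end

section
/- Let Q and R be real inner product spaces, T : Q → R a linear map, and P := range T ⊆ R. Let λ ∈ ℝ and let E ∈ Q be nonzero. Then the following are equivalent: (i) λ > 0 and ⟨T E, T F⟩ = λ⟨E,F⟩ for all F ∈ Q; (ii) there exists p ∈ P such that (E,p) ≠ 0, ⟨E,F⟩ + ⟨T F, p⟩ = 0 for all F ∈ Q, and ⟨T E, q⟩ = −λ⟨p,q⟩ for all q ∈ P. Moreover, in case (i) holds, the element p in (ii) can be taken to be p = −λ⁻¹ T E, and in case (ii) one necessarily has λ > 0. -/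
open scoped RealInnerProductSpace

/-- Equivalence of the Galerkin eigenvalue problem `⟪T E, T F⟫ = λ ⟪E, F⟫` and the
mixed eigenvalue problem on `Q × P` with `P = range T`, for a nonzero eigenvector `E`. -/
theorem galerkin_mixed_eigen_equiv
    {Q R : Type*} [NormedAddCommGroup Q] [InnerProductSpace ℝ Q]
    [NormedAddCommGroup R] [InnerProductSpace ℝ R]
    (T : Q →ₗ[ℝ] R) (lam : ℝ) (E : Q) (hE : E ≠ 0) :
    (((0 < lam ∧ ∀ F : Q, ⟪T E, T F⟫ = lam * ⟪E, F⟫) ↔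
      (∃ p ∈ LinearMap.range T, (E, p) ≠ 0 ∧
        (∀ F : Q, ⟪E, F⟫ + ⟪T F, p⟫ = 0) ∧
        (∀ q ∈ LinearMap.range T, ⟪T E, q⟫ = -lam * ⟪p, q⟫))) ∧
    ((0 < lam ∧ ∀ F : Q, ⟪T E, T F⟫ = lam * ⟪E, F⟫) →
      ((-lam⁻¹ • T E) ∈ LinearMap.range T ∧ (E, -lam⁻¹ • T E) ≠ 0 ∧
        (∀ F : Q, ⟪E, F⟫ + ⟪T F, -lam⁻¹ • T E⟫ = 0) ∧
        (∀ q ∈ LinearMap.range T, ⟪T E, q⟫ = -lam * ⟪-lam⁻¹ • T E, q⟫))) ∧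
    ((∃ p ∈ LinearMap.range T, (E, p) ≠ 0 ∧
        (∀ F : Q, ⟪E, F⟫ + ⟪T F, p⟫ = 0) ∧
        (∀ q ∈ LinearMap.range T, ⟪T E, q⟫ = -lam * ⟪p, q⟫)) → 0 < lam)) := by
  have h1 : (0 < lam ∧ ∀ F : Q, ⟪T E, T F⟫ = lam * ⟪E, F⟫) →
      ((-lam⁻¹ • T E) ∈ LinearMap.range T ∧ (E, -lam⁻¹ • T E) ≠ 0 ∧
        (∀ F : Q, ⟪E, F⟫ + ⟪T F, -lam⁻¹ • T E⟫ = 0) ∧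
        (∀ q ∈ LinearMap.range T, ⟪T E, q⟫ = -lam * ⟪-lam⁻¹ • T E, q⟫)) := by
    rintro ⟨hl, h⟩
    have hl0 := hl.ne'
    refine ⟨Submodule.smul_mem _ _ ⟨E, rfl⟩, fun h0 => hE (congrArg Prod.fst h0), ?_, ?_⟩
    · intro F
      rw [real_inner_smul_right, real_inner_comm (T E) (T F), h F]
      field_simp
      ring
    · intro q _
      rw [real_inner_smul_left]
      field_simp
  have h2 : (∃ p ∈ LinearMap.range T, (E, p) ≠ 0 ∧
        (∀ F : Q, ⟪E, F⟫ + ⟪T F, p⟫ = 0) ∧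
        (∀ q ∈ LinearMap.range T, ⟪T E, q⟫ = -lam * ⟪p, q⟫)) →
      (0 < lam ∧ ∀ F : Q, ⟪T E, T F⟫ = lam * ⟪E, F⟫) := by
    rintro ⟨p, hp, _, ha, hb⟩
    constructor
    · have e1 := ha E
      have e2 := hb p hp
      have e3 : 0 < ⟪E, E⟫ := real_inner_self_pos.mpr hE
      have e4 : 0 ≤ ⟪p, p⟫ := real_inner_self_nonneg
      by_contra hc
      nlinarith [mul_nonneg (sub_nonneg.mpr (not_lt.mp hc)) e4]
    · intro F
      have e1 := ha F
      have e2 := hb (T F) ⟨F, rfl⟩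
      rw [real_inner_comm] at e1
      rw [real_inner_comm p (T F)] at e1
      rw [e2, real_inner_comm F E] at *
      linear_combination (-lam) * e1
  exact ⟨⟨fun h => ⟨_, h1 h⟩, h2⟩, h1, fun h => (h2 h).1⟩
end

section
/- Let v₀, v₁, v₂, v₃ ∈ ℝ³ be affinely independent (the vertices of a nondegenerate tetrahedron T). Let p(x) = a + b•x with a ∈ ℝ³, b ∈ ℝ. For each of the four faces f of T, let n_f be a nonzero vector normal to the plane of f. If for each face f one has p(x)·n_f = 0 for all x in the plane through the three vertices of f, then p = 0 (i.e., a = 0 and b = 0). -/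
/-- The dot product on `ℝ³`. -/
def dot3 (x y : Fin 3 → ℝ) : ℝ := ∑ i, x i * y i

theorem span_edges (v : Fin 4 → Fin 3 → ℝ) (hv : AffineIndependent ℝ v) (j : Fin 4)
    (w : Fin 3 → ℝ) : ∃ c : {k // k ≠ j} → ℝ, ∑ k, c k • (v k - v j) = w := by
  have hl := (affineIndependent_iff_linearIndependent_vsub ℝ v j).1 hv
  have ht := hl.span_eq_top_of_card_eq_finrank' (by simp)
  have hw : w ∈ Submodule.span ℝ (Set.range fun i : {k // k ≠ j} => (v i -ᵥ v j : Fin 3 → ℝ)) := by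
    rw [ht]; trivial
  exact (Submodule.mem_span_range_iff_exists_fun ℝ).1 hw

theorem dot3_eq (x y : Fin 3 → ℝ) : dot3 x y = x ⬝ᵥ y := rfl

/-- Unisolvence of the lowest-order face (Raviart–Thomas–Nedelec) element on a
tetrahedron: if `p(x) = a + b • x` has vanishing normal component on each of the
four face planes of a nondegenerate tetrahedron, then `p = 0`. -/
theorem face_element_unisolvence
    (v : Fin 4 → Fin 3 → ℝ) (hv : AffineIndependent ℝ v)
    (a : Fin 3 → ℝ) (b : ℝ)
    (n : Fin 4 → Fin 3 → ℝ)
    (hn : ∀ i, n i ≠ 0)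
    (hperp : ∀ i j k : Fin 4, j ≠ i → k ≠ i → dot3 (n i) (v j - v k) = 0)
    (h : ∀ i : Fin 4, ∀ x ∈ affineSpan ℝ (v '' {j | j ≠ i}),
      dot3 (a + b • x) (n i) = 0) :
    a = 0 ∧ b = 0 := by
  simp only [dot3_eq] at hperp h
  have key : ∀ i j, i ≠ j → n i ⬝ᵥ (v i - v j) ≠ 0 := by
    intro i j hij h0
    obtain ⟨c, hc⟩ := span_edges v hv j (n i)
    apply hn i
    rw [← dotProduct_self_eq_zero (v := n i)]
    nth_rewrite 2 [← hc]
    rw [dotProduct_sum]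
    apply Finset.sum_eq_zero
    intro k _
    rw [dotProduct_smul]
    by_cases hk : (k : Fin 4) = i
    · rw [hk, h0, smul_zero]
    · rw [hperp i k j hk hij.symm, smul_zero]
  have hz : ∀ j, a + b • v j = 0 := by
    intro j
    obtain ⟨c, hc⟩ := span_edges v hv j (a + b • v j)
    rw [← hc]
    apply Finset.sum_eq_zero
    intro i _
    have h1 := h i (v j) (subset_affineSpan ℝ _ ⟨j, i.2.symm, rfl⟩)
    rw [dotProduct_comm, ← hc, dotProduct_sum, Finset.sum_eq_single i] at h1
    · rw [dotProduct_smul, smul_eq_mul] at h1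
      rw [(mul_eq_zero.1 h1).resolve_right (key i j i.2), zero_smul]
    · intro k _ hk
      rw [dotProduct_smul, hperp i k j (fun e => hk (Subtype.ext e)) i.2.symm, smul_zero]
    · intro hh; exact absurd (Finset.mem_univ _) hh
  have hb : b = 0 := by
    have h2 : b • (v 0 - v 1) = 0 := by
      rw [smul_sub, ← add_sub_add_left_eq_sub _ _ a, hz, hz, sub_zero]
    refine (smul_eq_zero.1 h2).resolve_right fun e => ?_
    exact absurd (hv.injective (sub_eq_zero.1 e)) (by decide)
  refine ⟨?_, hb⟩
  have h3 := hz 0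
  rwa [hb, zero_smul, add_zero] at h3
end

section
/- Let v₀, v₁, v₂, v₃ ∈ ℝ³ be affinely independent (the vertices of a nondegenerate tetrahedron T). Let p(x) = a + b × x with a, b ∈ ℝ³, where × denotes the cross product. If for each of the six edges e of T, with endpoints vᵢ, vⱼ, one has p(x)·(vⱼ − vᵢ) = 0 for all x on the segment from vᵢ to vⱼ, then p = 0 (i.e., a = 0 and b = 0). -/
lemma key_aux (v : Fin 4 → Fin 3 → ℝ) (hv : AffineIndependent ℝ v) (w : Fin 3 → ℝ)
    (hw : ∀ i : Fin 3, dot3 w (v i.succ - v 0) = 0) : w = 0 := by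
  have h1 := (affineIndependent_iff_linearIndependent_vsub ℝ v 0).1 hv
  have h2 : LinearIndependent ℝ (fun i : Fin 3 => v i.succ - v 0) :=
    h1.comp (fun i : Fin 3 => (⟨i.succ, Fin.succ_ne_zero i⟩ : {x : Fin 4 // x ≠ 0}))
      (fun i j hij => Fin.succ_injective _ (congrArg Subtype.val hij))
  have h3 : IsUnit (Matrix.of (fun i : Fin 3 => v i.succ - v 0)) :=
    Matrix.linearIndependent_rows_iff_isUnit.1 h2
  apply Matrix.mulVec_injective_of_isUnit h3
  rw [Matrix.mulVec_zero]
  ext i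
  have := hw i
  simp only [dot3] at this
  simp only [Matrix.mulVec, dotProduct, Matrix.of_apply, Pi.zero_apply]
  rw [← this]
  exact Finset.sum_congr rfl fun _ _ => mul_comm _ _

/-- Unisolvence of the lowest-order edge (Nedelec) element on a tetrahedron:
if `p(x) = a + b × x` has vanishing tangential component on each of the six
edges of a nondegenerate tetrahedron, then `p = 0`. -/
theorem edge_element_unisolvence
    (v : Fin 4 → Fin 3 → ℝ) (hv : AffineIndependent ℝ v)
    (a b : Fin 3 → ℝ)
    (h : ∀ i j : Fin 4, i ≠ j → ∀ x ∈ segment ℝ (v i) (v j),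
      dot3 (a + crossProduct b x) (v j - v i) = 0) :
    a = 0 ∧ b = 0 := by
  have h' : ∀ i j : Fin 4, dot3 (a + crossProduct b (v i)) (v j - v i) = 0 := by
    intro i j
    by_cases hij : i = j
    · subst hij; simp [dot3]
    · exact h i j hij _ (left_mem_segment ℝ _ _)
  have hc : ∀ i, a + crossProduct b (v i) = 0 := by
    intro i
    apply key_aux v hv
    intro j
    have e1 := h' i j.succ
    have e2 := h' i 0
    simp only [dot3, Fin.sum_univ_three, Pi.sub_apply] at e1 e2 ⊢
    linear_combination e1 - e2
  have hb : ∀ u : Fin 3 → ℝ, crossProduct b u = 0 := by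
    intro u
    apply key_aux v hv
    intro j
    have e1 := hc j.succ
    have e2 := hc 0
    have e : crossProduct b (v j.succ - v 0) = 0 := by
      rw [map_sub, sub_eq_zero]
      exact add_left_cancel (e1.trans e2.symm)
    have f0 := congrFun e 0
    have f1 := congrFun e 1
    have f2 := congrFun e 2
    generalize v j.succ - v 0 = d at *
    simp [cross_apply] at f0 f1 f2
    simp [dot3, Fin.sum_univ_three, cross_apply]
    linear_combination -u 0 * f0 - u 1 * f1 - u 2 * f2
  have ha : a = 0 := by simpa [hb] using hc 0
  refine ⟨ha, ?_⟩
  have g0 := hb ![1, 0, 0]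
  have g1 := hb ![0, 1, 0]
  have p1 := congrFun g0 1
  have p2 := congrFun g0 2
  have p0 := congrFun g1 2
  simp [cross_apply] at p0 p1 p2
  ext i
  fin_cases i <;> simp [*]
end

section
/- The set of vector fields {x ↦ a(x) + b(x) × x : a, b ∈ P₁(ℝ³,ℝ³)}, where P₁(ℝ³,ℝ³) denotes polynomial vector fields of total degree at most 1 and × denotes the cross product, is a real vector subspace of the space P₂(ℝ³,ℝ³) of polynomial vector fields of degree at most 2, and its dimension is 20. -/
/-- `PolyVF3 p` : vector fields on `ℝ³` whose components are polynomial functions of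
total degree at most `p`, i.e. `P_p(ℝ³, ℝ³)`. -/
def PolyVF3 (p : ℕ) : Set ((Fin 3 → ℝ) → Fin 3 → ℝ) :=
  { f | ∃ q : Fin 3 → MvPolynomial (Fin 3) ℝ,
      (∀ i, (q i).totalDegree ≤ p) ∧ ∀ x i, f x i = MvPolynomial.eval x (q i) }

theorem affine_of_deg_one (q : MvPolynomial (Fin 3) ℝ) (h : q.totalDegree ≤ 1) :
    ∃ c d e f : ℝ, ∀ x : Fin 3 → ℝ,
      MvPolynomial.eval x q = c + d * x 0 + e * x 1 + f * x 2 := by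
  have key : ∃ c d e f : ℝ, ∀ x : Fin 3 → ℝ,
      MvPolynomial.eval x (∑ m ∈ q.support, MvPolynomial.monomial m (q.coeff m))
        = c + d * x 0 + e * x 1 + f * x 2 := by
    refine Finset.sum_induction (fun m => MvPolynomial.monomial m (q.coeff m))
      (fun p => ∃ c d e f : ℝ, ∀ x : Fin 3 → ℝ,
        MvPolynomial.eval x p = c + d * x 0 + e * x 1 + f * x 2) ?_ ?_ ?_
    · rintro a b ⟨c, d, e, f, h1⟩ ⟨c', d', e', f', h2⟩
      refine ⟨c + c', d + d', e + e', f + f', fun x => ?_⟩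
      rw [map_add, h1, h2]; ring
    · exact ⟨0, 0, 0, 0, fun x => by simp⟩
    · intro m hm
      have hd := (MvPolynomial.le_totalDegree hm).trans h
      rcases Nat.le_one_iff_eq_zero_or_eq_one.1 hd with h0 | h1
      · have : m = 0 := by
          ext i
          by_contra hi
          have hi' : i ∈ m.support := by simpa using hi
          have := (Finset.sum_eq_zero_iff.1 h0) i hi'
          exact hi this
        subst this
        exact ⟨q.coeff 0, 0, 0, 0, fun x => by simp⟩
      · obtain ⟨i, rfl⟩ := (Finsupp.sum_eq_one_iff _).1 h1
        generalize q.coeff (Finsupp.single i 1) = r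
        fin_cases i
        · exact ⟨0, r, 0, 0, fun x => by simp [MvPolynomial.eval_monomial]⟩
        · exact ⟨0, 0, r, 0, fun x => by simp [MvPolynomial.eval_monomial]⟩
        · exact ⟨0, 0, 0, r, fun x => by simp [MvPolynomial.eval_monomial]⟩
  rwa [← MvPolynomial.as_sum q] at key

theorem deg_affine (c d e f : ℝ) :
    (MvPolynomial.C c + MvPolynomial.C d * MvPolynomial.X 0 + MvPolynomial.C e * MvPolynomial.X 1
      + MvPolynomial.C f * MvPolynomial.X 2 : MvPolynomial (Fin 3) ℝ).totalDegree ≤ 1 := by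
  have h (r : ℝ) (i : Fin 3) :
      (MvPolynomial.C r * MvPolynomial.X i : MvPolynomial (Fin 3) ℝ).totalDegree ≤ 1 :=
    (MvPolynomial.totalDegree_mul _ _).trans (by simp)
  refine (MvPolynomial.totalDegree_add _ _).trans (max_le ?_ (h _ _))
  refine (MvPolynomial.totalDegree_add _ _).trans (max_le ?_ (h _ _))
  refine (MvPolynomial.totalDegree_add _ _).trans (max_le ?_ (h _ _))
  simp

theorem mem_P1 (a : (Fin 3 → ℝ) → Fin 3 → ℝ) :
    a ∈ PolyVF3 1 ↔ ∃ c d e f : Fin 3 → ℝ, ∀ x i,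
      a x i = c i + d i * x 0 + e i * x 1 + f i * x 2 := by
  constructor
  · rintro ⟨q, hq, ha⟩
    choose c d e f h using fun i => affine_of_deg_one (q i) (hq i)
    exact ⟨c, d, e, f, fun x i => by rw [ha, h]⟩
  · rintro ⟨c, d, e, f, h⟩
    exact ⟨fun i => _, fun i => deg_affine (c i) (d i) (e i) (f i), fun x i => by simp [h]⟩

/-- The explicit parametrisation. -/
def edgeMap : (Fin 20 → ℝ) →ₗ[ℝ] ((Fin 3 → ℝ) → Fin 3 → ℝ) where
  toFun c := fun x =>
    ![c 0 + c 3 * x 0 + c 4 * x 1 + c 5 * x 2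
        + ((c 15 * x 0 + c 16 * x 1 + c 17 * x 2) * x 2 - (c 18 * x 0 + c 19 * x 1) * x 1),
      c 1 + c 6 * x 0 + c 7 * x 1 + c 8 * x 2
        + ((c 18 * x 0 + c 19 * x 1) * x 0 - (c 12 * x 0 + c 13 * x 1 + c 14 * x 2) * x 2),
      c 2 + c 9 * x 0 + c 10 * x 1 + c 11 * x 2
        + ((c 12 * x 0 + c 13 * x 1 + c 14 * x 2) * x 1
          - (c 15 * x 0 + c 16 * x 1 + c 17 * x 2) * x 0)]
  map_add' c d := by
    funext x i
    fin_cases i <;> simp <;> ring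
  map_smul' r c := by
    funext x i
    fin_cases i <;> simp <;> ring

theorem edgeMap_inj : Function.Injective edgeMap := by
  rw [injective_iff_map_eq_zero]
  intro c hc
  have h (u v w : ℝ) :
      (c 0 + c 3 * u + c 4 * v + c 5 * w
        + ((c 15 * u + c 16 * v + c 17 * w) * w - (c 18 * u + c 19 * v) * v) = 0) ∧
      (c 1 + c 6 * u + c 7 * v + c 8 * w
        + ((c 18 * u + c 19 * v) * u - (c 12 * u + c 13 * v + c 14 * w) * w) = 0) ∧
      (c 2 + c 9 * u + c 10 * v + c 11 * w
        + ((c 12 * u + c 13 * v + c 14 * w) * v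
          - (c 15 * u + c 16 * v + c 17 * w) * u) = 0) :=
    ⟨congrFun (congrFun hc ![u, v, w]) 0, congrFun (congrFun hc ![u, v, w]) 1,
      congrFun (congrFun hc ![u, v, w]) 2⟩
  obtain ⟨a1, a2, a3⟩ := h 0 0 0
  obtain ⟨b1, b2, b3⟩ := h 1 0 0
  obtain ⟨c1, c2, c3⟩ := h (-1) 0 0
  obtain ⟨d1, d2, d3⟩ := h 0 1 0
  obtain ⟨e1, e2, e3⟩ := h 0 (-1) 0
  obtain ⟨f1, f2, f3⟩ := h 0 0 1
  obtain ⟨g1, g2, g3⟩ := h 0 0 (-1)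
  obtain ⟨i1, i2, i3⟩ := h 1 1 0
  obtain ⟨j1, j2, j3⟩ := h 1 0 1
  obtain ⟨k1, k2, k3⟩ := h 0 1 1
  clear h hc
  funext i
  fin_cases i
  · change c 0 = 0; linarith
  · change c 1 = 0; linarith
  · change c 2 = 0; linarith
  · change c 3 = 0; linarith
  · change c 4 = 0; linarith
  · change c 5 = 0; linarith
  · change c 6 = 0; linarith
  · change c 7 = 0; linarith
  · change c 8 = 0; linarith
  · change c 9 = 0; linarith
  · change c 10 = 0; linarith
  · change c 11 = 0; linarith
  · change c 12 = 0; linarith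
  · change c 13 = 0; linarith
  · change c 14 = 0; linarith
  · change c 15 = 0; linarith
  · change c 16 = 0; linarith
  · change c 17 = 0; linarith
  · change c 18 = 0; linarith
  · change c 19 = 0; linarith

theorem shape_sub (a b : (Fin 3 → ℝ) → Fin 3 → ℝ) (ha : a ∈ PolyVF3 1) (hb : b ∈ PolyVF3 1) :
    (fun x => a x + crossProduct (b x) x) ∈ PolyVF3 2 := by
  obtain ⟨p, hp, ha⟩ := ha
  obtain ⟨q, hq, hb⟩ := hb
  have hm (i j : Fin 3) : (q i * MvPolynomial.X j).totalDegree ≤ 2 :=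
    (MvPolynomial.totalDegree_mul _ _).trans (by have := hq i; simp; omega)
  have hr (i j k l m : Fin 3) :
      (p i + (q j * MvPolynomial.X k - q l * MvPolynomial.X m)).totalDegree ≤ 2 :=
    (MvPolynomial.totalDegree_add _ _).trans (max_le ((hp i).trans one_le_two)
      ((MvPolynomial.totalDegree_sub _ _).trans (max_le (hm _ _) (hm _ _))))
  refine ⟨![p 0 + (q 1 * MvPolynomial.X 2 - q 2 * MvPolynomial.X 1),
    p 1 + (q 2 * MvPolynomial.X 0 - q 0 * MvPolynomial.X 2),
    p 2 + (q 0 * MvPolynomial.X 1 - q 1 * MvPolynomial.X 0)], ?_, ?_⟩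
  · intro i
    fin_cases i <;> exact hr _ _ _ _ _
  · intro x i
    fin_cases i <;> simp [cross_apply, ha, hb] <;> ring

/-- The set `{x ↦ a(x) + b(x) × x : a, b ∈ P₁(ℝ³,ℝ³)}` is a real subspace of
`P₂(ℝ³,ℝ³)` of dimension `20` (the shape functions of the second lowest order
edge element). -/
theorem edge_element_shape_space_dim :
    ∃ S : Submodule ℝ ((Fin 3 → ℝ) → Fin 3 → ℝ),
      (S : Set ((Fin 3 → ℝ) → Fin 3 → ℝ)) =
        { f | ∃ a ∈ PolyVF3 1, ∃ b ∈ PolyVF3 1, f = fun x => a x + crossProduct (b x) x } ∧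
      (S : Set ((Fin 3 → ℝ) → Fin 3 → ℝ)) ⊆ PolyVF3 2 ∧
      Module.finrank ℝ S = 20 := by
  have hS : ((LinearMap.range edgeMap : Submodule ℝ _) : Set ((Fin 3 → ℝ) → Fin 3 → ℝ)) =
      { f | ∃ a ∈ PolyVF3 1, ∃ b ∈ PolyVF3 1, f = fun x => a x + crossProduct (b x) x } := by
    ext f
    constructor
    · rintro ⟨c, rfl⟩
      refine ⟨fun x i => ![c 0, c 1, c 2] i + ![c 3, c 6, c 9] i * x 0 + ![c 4, c 7, c 10] i * x 1
          + ![c 5, c 8, c 11] i * x 2, (mem_P1 _).2 ⟨_, _, _, _, fun x i => rfl⟩,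
        fun x i => (0 : Fin 3 → ℝ) i + ![c 12, c 15, c 18] i * x 0 + ![c 13, c 16, c 19] i * x 1
          + ![c 14, c 17, 0] i * x 2, (mem_P1 _).2 ⟨_, _, _, _, fun x i => rfl⟩, ?_⟩
      funext x i
      fin_cases i <;> simp [edgeMap, cross_apply]
    · rintro ⟨a, ha, b, hb, rfl⟩
      obtain ⟨p, q, r, s, ha⟩ := (mem_P1 _).1 ha
      obtain ⟨t, u, v, w, hb⟩ := (mem_P1 _).1 hb
      refine ⟨![p 0, p 1, p 2, q 0, r 0 - t 2, s 0 + t 1, q 1 + t 2, r 1, s 1 - t 0,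
        q 2 - t 1, r 2 + t 0, s 2, u 0 - w 2, v 0, w 0, u 1, v 1 - w 2, w 1, u 2, v 2], ?_⟩
      funext x i
      fin_cases i <;> simp [edgeMap, cross_apply, ha, hb] <;> ring
  refine ⟨LinearMap.range edgeMap, hS, ?_, ?_⟩
  · rw [hS]
    rintro f ⟨a, ha, b, hb, rfl⟩
    exact shape_sub a b ha hb
  · rw [LinearMap.finrank_range_of_inj edgeMap_inj]
    simp
end

section
/- Let 𝕊 denote the space of symmetric 2×2 real matrices, and for a matrix field τ : ℝ² → 𝕊 let div τ : ℝ² → ℝ² be the row-wise divergence, (div τ)ᵢ = ∂₁τᵢ₁ + ∂₂τᵢ₂. Then the set S := {τ ∈ P₃(ℝ²,𝕊) : div τ ∈ P₁(ℝ²,ℝ²)} is a real vector space of dimension 24, where P_p denotes polynomial functions of total degree at most p. -/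
/-- The `i`-th partial derivative of a scalar function on `ℝ²`. -/
noncomputable def pd2 (i : Fin 2) (f : (Fin 2 → ℝ) → ℝ) (x : Fin 2 → ℝ) : ℝ :=
  fderiv ℝ f x (Pi.single i 1)

/-- The row-wise divergence of a matrix field on `ℝ²`: `(div τ)ᵢ = ∂₁τᵢ₁ + ∂₂τᵢ₂`. -/
noncomputable def divRow (τ : (Fin 2 → ℝ) → Matrix (Fin 2) (Fin 2) ℝ)
    (x : Fin 2 → ℝ) (i : Fin 2) : ℝ :=
  pd2 0 (fun y => τ y i 0) x + pd2 1 (fun y => τ y i 1) x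

/-- `PolyMat2 p` : matrix fields on `ℝ²` whose entries are polynomial functions of
total degree at most `p`. -/
def PolyMat2 (p : ℕ) : Set ((Fin 2 → ℝ) → Matrix (Fin 2) (Fin 2) ℝ) :=
  { τ | ∃ q : Matrix (Fin 2) (Fin 2) (MvPolynomial (Fin 2) ℝ),
      (∀ i j, (q i j).totalDegree ≤ p) ∧ ∀ x i j, τ x i j = MvPolynomial.eval x (q i j) }

/-- `PolyVF2 p` : vector fields on `ℝ²` whose components are polynomial functions of
total degree at most `p`, i.e. `P_p(ℝ², ℝ²)`. -/
def PolyVF2 (p : ℕ) : Set ((Fin 2 → ℝ) → Fin 2 → ℝ) :=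
  { f | ∃ q : Fin 2 → MvPolynomial (Fin 2) ℝ,
      (∀ i, (q i).totalDegree ≤ p) ∧ ∀ x i, f x i = MvPolynomial.eval x (q i) }

noncomputable def awCub (a0 a1 a2 a3 a4 a5 a6 a7 a8 a9 : ℝ) (x : Fin 2 → ℝ) : ℝ :=
  a0 + a1 * x 0 + a2 * x 1 + a3 * x 0 ^ 2 + a4 * (x 0 * x 1) + a5 * x 1 ^ 2
    + a6 * x 0 ^ 3 + a7 * (x 0 ^ 2 * x 1) + a8 * (x 0 * x 1 ^ 2) + a9 * x 1 ^ 3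

theorem awCub_poly (a0 a1 a2 a3 a4 a5 a6 a7 a8 a9 : ℝ) :
    ∃ q : MvPolynomial (Fin 2) ℝ, q.totalDegree ≤ 3 ∧
      ∀ x, awCub a0 a1 a2 a3 a4 a5 a6 a7 a8 a9 x = MvPolynomial.eval x q := by
  have key : ∀ (i j : ℕ) (a : ℝ), i + j ≤ 3 →
      (MvPolynomial.C a * (MvPolynomial.X 0 ^ i * MvPolynomial.X 1 ^ j) :
        MvPolynomial (Fin 2) ℝ) ∈ MvPolynomial.restrictTotalDegree (Fin 2) ℝ 3 := by
    intro i j a h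
    rw [MvPolynomial.mem_restrictTotalDegree]
    refine (MvPolynomial.totalDegree_mul _ _).trans ?_
    have := MvPolynomial.totalDegree_mul (MvPolynomial.X 0 ^ i : MvPolynomial (Fin 2) ℝ)
      (MvPolynomial.X 1 ^ j)
    rw [MvPolynomial.totalDegree_X_pow, MvPolynomial.totalDegree_X_pow] at this
    rw [MvPolynomial.totalDegree_C]
    omega
  refine ⟨_, (MvPolynomial.mem_restrictTotalDegree _ _ _).1
    (add_mem (add_mem (add_mem (add_mem (add_mem (add_mem (add_mem (add_mem (add_mem
      (key 0 0 a0 (by norm_num)) (key 1 0 a1 (by norm_num))) (key 0 1 a2 (by norm_num)))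
      (key 2 0 a3 (by norm_num))) (key 1 1 a4 (by norm_num))) (key 0 2 a5 (by norm_num)))
      (key 3 0 a6 (by norm_num))) (key 2 1 a7 (by norm_num))) (key 1 2 a8 (by norm_num)))
      (key 0 3 a9 (by norm_num))), ?_⟩
  intro x
  simp [awCub]

theorem awCub_of_poly (q : MvPolynomial (Fin 2) ℝ) (hq : q.totalDegree ≤ 3) :
    ∃ a0 a1 a2 a3 a4 a5 a6 a7 a8 a9 : ℝ,
      ∀ x, MvPolynomial.eval x q = awCub a0 a1 a2 a3 a4 a5 a6 a7 a8 a9 x := by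
  have hev : ∀ x, MvPolynomial.eval x q =
      ∑ d ∈ q.support, q.coeff d * (x 0 ^ d 0 * x 1 ^ d 1) := by
    intro x
    rw [MvPolynomial.eval_eq']
    simp [Fin.prod_univ_two]
  have hdeg : ∀ d ∈ q.support, d 0 + d 1 ≤ 3 := by
    intro d hd
    have := (MvPolynomial.le_totalDegree hd).trans hq
    rwa [Finsupp.sum_fintype _ _ (by simp), Fin.sum_univ_two] at this
  simp_rw [hev]
  generalize q.support = s at hdeg
  induction s using Finset.induction_on with
  | empty => exact ⟨0,0,0,0,0,0,0,0,0,0, by simp [awCub]⟩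
  | insert d s hd ih =>
    obtain ⟨a0,a1,a2,a3,a4,a5,a6,a7,a8,a9,h⟩ :=
      ih (fun e he => hdeg e (Finset.mem_insert_of_mem he))
    have h3 := hdeg d (Finset.mem_insert_self _ _)
    simp_rw [Finset.sum_insert hd, h]
    generalize q.coeff d = c
    generalize d 0 = i at *
    generalize d 1 = j at *
    have hi : i ≤ 3 := by omega
    have hj : j ≤ 3 := by omega
    refine ⟨a0 + if i = 0 ∧ j = 0 then c else 0, a1 + if i = 1 ∧ j = 0 then c else 0,
      a2 + if i = 0 ∧ j = 1 then c else 0, a3 + if i = 2 ∧ j = 0 then c else 0,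
      a4 + if i = 1 ∧ j = 1 then c else 0, a5 + if i = 0 ∧ j = 2 then c else 0,
      a6 + if i = 3 ∧ j = 0 then c else 0, a7 + if i = 2 ∧ j = 1 then c else 0,
      a8 + if i = 1 ∧ j = 2 then c else 0, a9 + if i = 0 ∧ j = 3 then c else 0, fun x => ?_⟩
    interval_cases i <;> interval_cases j <;> first | omega | (simp [awCub]; ring)

theorem awLin_of_poly (q : MvPolynomial (Fin 2) ℝ) (hq : q.totalDegree ≤ 1) :
    ∃ a0 a1 a2 : ℝ, ∀ x, MvPolynomial.eval x q = a0 + a1 * x 0 + a2 * x 1 := by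
  have hev : ∀ x, MvPolynomial.eval x q =
      ∑ d ∈ q.support, q.coeff d * (x 0 ^ d 0 * x 1 ^ d 1) := by
    intro x
    rw [MvPolynomial.eval_eq']
    simp [Fin.prod_univ_two]
  have hdeg : ∀ d ∈ q.support, d 0 + d 1 ≤ 1 := by
    intro d hd
    have := (MvPolynomial.le_totalDegree hd).trans hq
    rwa [Finsupp.sum_fintype _ _ (by simp), Fin.sum_univ_two] at this
  simp_rw [hev]
  generalize q.support = s at hdeg
  induction s using Finset.induction_on with
  | empty => exact ⟨0,0,0, by simp⟩
  | insert d s hd ih =>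
    obtain ⟨a0,a1,a2,h⟩ := ih (fun e he => hdeg e (Finset.mem_insert_of_mem he))
    have h3 := hdeg d (Finset.mem_insert_self _ _)
    simp_rw [Finset.sum_insert hd, h]
    generalize q.coeff d = c
    generalize d 0 = i at *
    generalize d 1 = j at *
    have hi : i ≤ 1 := by omega
    have hj : j ≤ 1 := by omega
    refine ⟨a0 + if i = 0 ∧ j = 0 then c else 0, a1 + if i = 1 ∧ j = 0 then c else 0,
      a2 + if i = 0 ∧ j = 1 then c else 0, fun x => ?_⟩
    interval_cases i <;> interval_cases j <;> first | omega | (simp; try ring)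

theorem awLin_poly (a0 a1 a2 : ℝ) :
    ∃ q : MvPolynomial (Fin 2) ℝ, q.totalDegree ≤ 1 ∧
      ∀ x, a0 + a1 * x 0 + a2 * x 1 = MvPolynomial.eval x q := by
  have key : ∀ (i : Fin 2) (a : ℝ),
      (MvPolynomial.C a * MvPolynomial.X i : MvPolynomial (Fin 2) ℝ) ∈
        MvPolynomial.restrictTotalDegree (Fin 2) ℝ 1 := by
    intro i a
    rw [MvPolynomial.mem_restrictTotalDegree]
    refine (MvPolynomial.totalDegree_mul _ _).trans ?_
    simp
  have key0 : (MvPolynomial.C a0 : MvPolynomial (Fin 2) ℝ) ∈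
        MvPolynomial.restrictTotalDegree (Fin 2) ℝ 1 := by
    rw [MvPolynomial.mem_restrictTotalDegree]
    simp
  exact ⟨_, (MvPolynomial.mem_restrictTotalDegree _ _ _).1
    (add_mem (add_mem key0 (key 0 a1)) (key 1 a2)), fun x => by simp⟩

theorem aw_pd2_eq (f : (Fin 2 → ℝ) → ℝ) (x : Fin 2 → ℝ) (i : Fin 2) (A B C D : ℝ)
    (hf : DifferentiableAt ℝ f x)
    (h : ∀ t : ℝ, f (x + t • Pi.single i 1) = A + B * t + C * t ^ 2 + D * t ^ 3) :
    pd2 i f x = B := by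
  unfold pd2
  rw [← hf.lineDeriv_eq_fderiv, lineDeriv]
  simp_rw [h]
  have h1 := hasDerivAt_id (0 : ℝ)
  have := (((hasDerivAt_const (0 : ℝ) A).add (h1.const_mul B)).add
    ((h1.pow 2).const_mul C)).add ((h1.pow 3).const_mul D)
  refine Eq.trans (this.deriv) ?_
  simp

theorem awCub_pd0 (a0 a1 a2 a3 a4 a5 a6 a7 a8 a9 : ℝ) (x : Fin 2 → ℝ) :
    pd2 0 (awCub a0 a1 a2 a3 a4 a5 a6 a7 a8 a9) x =
      a1 + 2 * a3 * x 0 + a4 * x 1 + 3 * a6 * x 0 ^ 2 + 2 * a7 * x 0 * x 1 + a8 * x 1 ^ 2 := by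
  apply aw_pd2_eq _ _ _ (awCub a0 a1 a2 a3 a4 a5 a6 a7 a8 a9 x) _
    (a3 + 3 * a6 * x 0 + a7 * x 1) a6
  · unfold awCub; fun_prop
  · intro t
    simp [awCub]
    ring

theorem awCub_pd1 (a0 a1 a2 a3 a4 a5 a6 a7 a8 a9 : ℝ) (x : Fin 2 → ℝ) :
    pd2 1 (awCub a0 a1 a2 a3 a4 a5 a6 a7 a8 a9) x =
      a2 + a4 * x 0 + 2 * a5 * x 1 + a7 * x 0 ^ 2 + 2 * a8 * x 0 * x 1 + 3 * a9 * x 1 ^ 2 := by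
  apply aw_pd2_eq _ _ _ (awCub a0 a1 a2 a3 a4 a5 a6 a7 a8 a9 x) _
    (a5 + 3 * a9 * x 1 + a8 * x 0) a9
  · unfold awCub; fun_prop
  · intro t
    simp [awCub]
    ring

theorem awQuad_lin (a b c d e f a' b' c' : ℝ)
    (h : ∀ x : Fin 2 → ℝ, a + b * x 0 + c * x 1 + d * x 0 ^ 2 + e * x 0 * x 1 + f * x 1 ^ 2
      = a' + b' * x 0 + c' * x 1) : d = 0 ∧ e = 0 ∧ f = 0 := by
  have h0 := h ![0, 0]
  have h1 := h ![1, 0]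
  have h2 := h ![-1, 0]
  have h3 := h ![0, 1]
  have h4 := h ![0, -1]
  have h5 := h ![1, 1]
  simp at h0 h1 h2 h3 h4 h5
  refine ⟨?_, ?_, ?_⟩ <;> linarith

theorem awCub_zero (a0 a1 a2 a3 a4 a5 a6 a7 a8 a9 : ℝ)
    (h : ∀ x, awCub a0 a1 a2 a3 a4 a5 a6 a7 a8 a9 x = 0) :
    a0 = 0 ∧ a1 = 0 ∧ a2 = 0 ∧ a3 = 0 ∧ a4 = 0 ∧ a5 = 0 ∧ a6 = 0 ∧ a7 = 0 ∧ a8 = 0 ∧ a9 = 0 := by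
  have h0 := h ![0, 0]
  have h1 := h ![1, 0]
  have h2 := h ![-1, 0]
  have h3 := h ![2, 0]
  have h4 := h ![0, 1]
  have h5 := h ![0, -1]
  have h6 := h ![0, 2]
  have h7 := h ![1, 1]
  have h8 := h ![1, -1]
  have h9 := h ![-1, 1]
  simp [awCub] at h0 h1 h2 h3 h4 h5 h6 h7 h8 h9
  subst h0
  have e3 : a3 = 0 := by linarith
  have e5 : a5 = 0 := by linarith
  have e6 : a6 = 0 := by linarith
  have e1 : a1 = 0 := by linarith
  have e9 : a9 = 0 := by linarith
  have e2 : a2 = 0 := by linarith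
  subst e3 e5 e6 e1 e9 e2
  refine ⟨rfl, rfl, rfl, rfl, ?_, rfl, rfl, ?_, ?_, rfl⟩ <;> linarith

noncomputable def awMap : (Fin 24 → ℝ) →ₗ[ℝ] ((Fin 2 → ℝ) → Matrix (Fin 2) (Fin 2) ℝ) where
  toFun c x :=
    !![awCub (c 0) (c 1) (c 2) (c 3) (c 4) (c 5) (c 18) (c 19) (-3 * c 22) (c 20) x,
       awCub (c 6) (c 7) (c 8) (c 9) (c 10) (c 11) (c 21) (-3 * c 18) (- c 19) (c 22) x;
       awCub (c 6) (c 7) (c 8) (c 9) (c 10) (c 11) (c 21) (-3 * c 18) (- c 19) (c 22) x,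
       awCub (c 12) (c 13) (c 14) (c 15) (c 16) (c 17) (c 23) (-3 * c 21) (3 * c 18) (c 19 / 3) x]
  map_add' c d := by
    funext x
    ext i j
    fin_cases i <;> fin_cases j <;> simp [awCub] <;> ring
  map_smul' r c := by
    funext x
    ext i j
    fin_cases i <;> fin_cases j <;> simp [awCub] <;> ring

theorem awMap_apply (c : Fin 24 → ℝ) (x : Fin 2 → ℝ) : awMap c x =
    !![awCub (c 0) (c 1) (c 2) (c 3) (c 4) (c 5) (c 18) (c 19) (-3 * c 22) (c 20) x,
       awCub (c 6) (c 7) (c 8) (c 9) (c 10) (c 11) (c 21) (-3 * c 18) (- c 19) (c 22) x;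
       awCub (c 6) (c 7) (c 8) (c 9) (c 10) (c 11) (c 21) (-3 * c 18) (- c 19) (c 22) x,
       awCub (c 12) (c 13) (c 14) (c 15) (c 16) (c 17) (c 23) (-3 * c 21) (3 * c 18) (c 19 / 3) x] :=
  rfl

theorem awMap_inj : Function.Injective awMap := by
  rw [← LinearMap.ker_eq_bot, LinearMap.ker_eq_bot']
  intro c hc
  have h : ∀ x i j, awMap c x i j = 0 := by intro x i j; rw [hc]; rfl
  have h00 := awCub_zero _ _ _ _ _ _ _ _ _ _ (fun x => h x 0 0)
  have h01 := awCub_zero _ _ _ _ _ _ _ _ _ _ (fun x => h x 0 1)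
  have h11 := awCub_zero _ _ _ _ _ _ _ _ _ _ (fun x => h x 1 1)
  funext i
  fin_cases i <;> simp only [Pi.zero_apply] <;> first
    | exact h00.1 | tauto

/-- The Arnold–Winther shape function space
`S = {τ ∈ P₃(ℝ²,𝕊) : div τ ∈ P₁(ℝ²,ℝ²)}` (symmetric-matrix-valued cubic
polynomial fields with linear row-wise divergence) is a real vector space of
dimension `24`. -/
theorem arnold_winther_shape_space_dim :
    ∃ S : Submodule ℝ ((Fin 2 → ℝ) → Matrix (Fin 2) (Fin 2) ℝ),
      (S : Set ((Fin 2 → ℝ) → Matrix (Fin 2) (Fin 2) ℝ)) =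
        { τ | (∀ x, (τ x).IsSymm) ∧ τ ∈ PolyMat2 3 ∧
              (fun x i => divRow τ x i) ∈ PolyVF2 1 } ∧
      Module.finrank ℝ S = 24 := by
  refine ⟨LinearMap.range awMap, ?_, ?_⟩
  swap
  · rw [LinearMap.finrank_range_of_inj awMap_inj]; simp
  ext τ
  simp only [SetLike.mem_coe, LinearMap.mem_range, Set.mem_ofPred_eq]
  constructor
  · rintro ⟨c, rfl⟩
    refine ⟨?_, ?_, ?_⟩
    · intro x
      rw [awMap_apply]
      ext i j
      fin_cases i <;> fin_cases j <;> rfl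
    · have : ∀ i j, ∃ q : MvPolynomial (Fin 2) ℝ, q.totalDegree ≤ 3 ∧
          ∀ x, awMap c x i j = MvPolynomial.eval x q := by
        intro i j
        fin_cases i <;> fin_cases j <;> exact awCub_poly _ _ _ _ _ _ _ _ _ _
      choose q hq hq' using this
      exact ⟨q, hq, fun x i j => hq' i j x⟩
    · have : ∀ i, ∃ q : MvPolynomial (Fin 2) ℝ, q.totalDegree ≤ 1 ∧
          ∀ x, divRow (awMap c) x i = MvPolynomial.eval x q := by
        intro i
        fin_cases i
        · obtain ⟨q, hq, h⟩ := awLin_poly (c 1 + c 8) (2 * c 3 + c 10) (c 4 + 2 * c 11)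
          refine ⟨q, hq, fun x => ?_⟩
          rw [← h]
          refine (congrArg₂ (· + ·) (awCub_pd0 _ _ _ _ _ _ _ _ _ _ x)
            (awCub_pd1 _ _ _ _ _ _ _ _ _ _ x)).trans ?_
          ring
        · obtain ⟨q, hq, h⟩ := awLin_poly (c 7 + c 14) (2 * c 9 + c 16) (c 10 + 2 * c 17)
          refine ⟨q, hq, fun x => ?_⟩
          rw [← h]
          refine (congrArg₂ (· + ·) (awCub_pd0 _ _ _ _ _ _ _ _ _ _ x)
            (awCub_pd1 _ _ _ _ _ _ _ _ _ _ x)).trans ?_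
          ring
      choose q hq hq' using this
      exact ⟨q, hq, fun x i => hq' i x⟩
  · rintro ⟨hs, ⟨q, hq, hτ⟩, ⟨r, hr, hdiv⟩⟩
    obtain ⟨a0,a1,a2,a3,a4,a5,a6,a7,a8,a9,ha⟩ := awCub_of_poly _ (hq 0 0)
    obtain ⟨b0,b1,b2,b3,b4,b5,b6,b7,b8,b9,hb⟩ := awCub_of_poly _ (hq 0 1)
    obtain ⟨c0,c1,c2,c3,c4,c5,c6,c7,c8,c9,hc⟩ := awCub_of_poly _ (hq 1 1)
    obtain ⟨u0,u1,u2,hu⟩ := awLin_of_poly _ (hr 0)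
    obtain ⟨v0,v1,v2,hv⟩ := awLin_of_poly _ (hr 1)
    have t00 : (fun y => τ y 0 0) = awCub a0 a1 a2 a3 a4 a5 a6 a7 a8 a9 := by
      funext y; rw [hτ, ha]
    have t01 : (fun y => τ y 0 1) = awCub b0 b1 b2 b3 b4 b5 b6 b7 b8 b9 := by
      funext y; rw [hτ, hb]
    have t10 : (fun y => τ y 1 0) = awCub b0 b1 b2 b3 b4 b5 b6 b7 b8 b9 := by
      funext y; rw [← (hs y).apply 1 0, hτ, hb]
    have t11 : (fun y => τ y 1 1) = awCub c0 c1 c2 c3 c4 c5 c6 c7 c8 c9 := by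
      funext y; rw [hτ, hc]
    have d0 := awQuad_lin (a1 + b2) (2 * a3 + b4) (a4 + 2 * b5) (3 * a6 + b7)
      (2 * a7 + 2 * b8) (a8 + 3 * b9) u0 u1 u2 (by
        intro x
        have := hdiv x 0
        simp only [divRow, t00, t01, awCub_pd0, awCub_pd1, hu] at this
        linarith)
    have d1 := awQuad_lin (b1 + c2) (2 * b3 + c4) (b4 + 2 * c5) (3 * b6 + c7)
      (2 * b7 + 2 * c8) (b8 + 3 * c9) v0 v1 v2 (by
        intro x
        have := hdiv x 1
        simp only [divRow, t10, t11, awCub_pd0, awCub_pd1, hv] at this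
        linarith)
    obtain ⟨e1, e2, e3⟩ := d0
    obtain ⟨f1, f2, f3⟩ := d1
    obtain rfl : b7 = -3 * a6 := by linarith
    obtain rfl : b8 = -a7 := by linarith
    obtain rfl : a8 = -3 * b9 := by linarith
    obtain rfl : c7 = -3 * b6 := by linarith
    obtain rfl : c8 = 3 * a6 := by linarith
    obtain rfl : c9 = a7 / 3 := by linarith
    refine ⟨![a0,a1,a2,a3,a4,a5,b0,b1,b2,b3,b4,b5,c0,c1,c2,c3,c4,c5,a6,a7,a9,b6,b9,c6], ?_⟩
    funext x
    ext i j
    fin_cases i <;> fin_cases j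
    · exact (congrFun t00 x).symm
    · exact (congrFun t01 x).symm
    · exact (congrFun t10 x).symm
    · exact (congrFun t11 x).symm
end

section
/- Let v₀, v₁, v₂ ∈ ℝ² be affinely independent (the vertices of a nondegenerate triangle T), and let q : ℝ² → ℝ be a polynomial of total degree at most 5. If q(x) = 0 and the gradient ∇q(x) = 0 for every point x on each of the three closed edges of T (the segments [v₀,v₁], [v₁,v₂], [v₂,v₀]), then q is identically zero. -/
lemma qv_subst (Q : MvPolynomial (Fin 2) ℝ) (hQ : Q.totalDegree ≤ 5)
    (g : Fin 2 → MvPolynomial (Fin 2) ℝ) (hg : ∀ i, (g i).totalDegree ≤ 1) :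
    (MvPolynomial.bind₁ g Q).totalDegree ≤ 5 := by
  rw [MvPolynomial.bind₁, MvPolynomial.aeval_def, MvPolynomial.eval₂_eq']
  refine MvPolynomial.totalDegree_finsetSum_le fun d hd => ?_
  have h1 : d 0 + d 1 ≤ 5 := by
    have := (MvPolynomial.le_totalDegree hd).trans hQ
    rwa [Finsupp.sum_fintype _ _ (by simp), Fin.sum_univ_two] at this
  refine (MvPolynomial.totalDegree_mul _ _).trans ?_
  rw [MvPolynomial.algebraMap_eq, MvPolynomial.totalDegree_C, Fin.prod_univ_two, zero_add]
  refine (MvPolynomial.totalDegree_mul _ _).trans ?_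
  have h2 := MvPolynomial.totalDegree_pow (g 0) (d 0)
  have h3 := MvPolynomial.totalDegree_pow (g 1) (d 1)
  have h4 := Nat.mul_le_mul_left (d 0) (hg 0)
  have h5 := Nat.mul_le_mul_left (d 1) (hg 1)
  omega

lemma qv_form (R : MvPolynomial (Fin 2) ℝ) (hR : R.totalDegree ≤ 5) :
    ∃ a : ℕ → ℕ → ℝ, (∀ i j, 5 < i + j → a i j = 0) ∧
      ∀ s t : ℝ, MvPolynomial.eval ![s, t] R =
        ∑ j ∈ Finset.range 6, (∑ i ∈ Finset.range 6, a i j * s ^ i) * t ^ j := by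
  have hs : ∀ d ∈ R.support, d 0 + d 1 ≤ 5 := fun d hd => by
    have := (MvPolynomial.le_totalDegree hd).trans hR
    rwa [Finsupp.sum_fintype _ _ (by simp), Fin.sum_univ_two] at this
  refine ⟨fun i j => R.coeff (Finsupp.equivFunOnFinite.symm ![i, j]), ?_, ?_⟩
  · intro i j hij
    by_contra hne
    have := hs _ (MvPolynomial.mem_support_iff.2 hne)
    simp at this
    omega
  · intro s t
    simp only [Finset.sum_mul]
    rw [← Finset.sum_product', MvPolynomial.eval_eq']
    have he : ∀ d : Fin 2 →₀ ℕ, Finsupp.equivFunOnFinite.symm ![d 0, d 1] = d := by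
      intro d; ext k; fin_cases k <;> simp
    refine Finset.sum_of_injOn (fun d => (d 1, d 0)) ?_ ?_ ?_ ?_
    · intro d _ d' _ h
      simp only [Prod.mk.injEq] at h
      rw [← he d, ← he d', h.1, h.2]
    · intro d hd
      have := hs d hd
      simp
      omega
    · rintro ⟨j, i⟩ _ hn
      by_contra hne
      apply hn
      refine ⟨Finsupp.equivFunOnFinite.symm ![i, j], ?_, by simp⟩
      simp only [Finset.mem_coe, MvPolynomial.mem_support_iff]
      intro h0
      apply hne
      simp [h0]
    · intro d _
      simp only [he, Fin.prod_univ_two]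
      simp [mul_assoc]

lemma qv_uni (c : ℕ → ℝ) (h : ∀ s ∈ Set.Icc (0:ℝ) 1, ∑ i ∈ Finset.range 6, c i * s ^ i = 0) :
    ∀ i ∈ Finset.range 6, c i = 0 := by
  let p : Polynomial ℝ := ∑ i ∈ Finset.range 6, Polynomial.C (c i) * Polynomial.X ^ i
  have hp : p = 0 := by
    apply Polynomial.eq_zero_of_infinite_isRoot
    refine (Set.Icc_infinite (zero_lt_one (α := ℝ))).mono fun s hs => ?_
    have := h s hs
    simpa [p, Polynomial.IsRoot, Polynomial.eval_finsetSum] using this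
  intro i hi
  have h2 : p.coeff i = c i := by
    simp only [p, Polynomial.finsetSum_coeff, Polynomial.coeff_C_mul_X_pow]
    simp [Finset.mem_range.1 hi]
  rw [← h2, hp, Polynomial.coeff_zero]

lemma qv_deriv (b : ℕ → ℝ) (h : HasDerivAt (fun t : ℝ => ∑ j ∈ Finset.range 6, b j * t ^ j) 0 0) :
    b 1 = 0 := by
  have h2 : HasDerivAt (fun t : ℝ => ∑ j ∈ Finset.range 6, b j * t ^ j)
      (∑ j ∈ Finset.range 6, b j * (j * (0:ℝ) ^ (j - 1))) 0 :=
    HasDerivAt.fun_sum fun j _ => (hasDerivAt_pow j (0:ℝ)).const_mul (b j)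
  have := h2.unique h
  simpa [Finset.sum_range_succ] using this

theorem quintic_vanishing_on_triangle_boundary
    (v : Fin 3 → Fin 2 → ℝ) (hv : AffineIndependent ℝ v)
    (q : (Fin 2 → ℝ) → ℝ)
    (hq : ∃ Q : MvPolynomial (Fin 2) ℝ, Q.totalDegree ≤ 5 ∧
      ∀ x, q x = MvPolynomial.eval x Q)
    (h : ∀ i j : Fin 3, i ≠ j → ∀ x ∈ segment ℝ (v i) (v j),
      q x = 0 ∧ fderiv ℝ q x = 0) :
    ∀ x, q x = 0 := by
  obtain ⟨Q, hQ, hqQ⟩ := hq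
  have hdiff : Differentiable ℝ q := by
    have : q = fun x => ∑ d ∈ Q.support, Q.coeff d * ∏ i, x i ^ d i := by
      ext x; rw [hqQ, MvPolynomial.eval_eq']
    rw [this]
    simp only [Fin.prod_univ_two]
    fun_prop
  have hF : ∀ i j : Fin 3, i ≠ j → ∀ x ∈ segment ℝ (v i) (v j), HasFDerivAt q (0 : (Fin 2 → ℝ) →L[ℝ] ℝ) x := by
    intro i j hij x hx
    have := (hdiff x).hasFDerivAt
    rwa [(h i j hij x hx).2] at this
  set e1 := v 1 - v 0 with he1
  set e2 := v 2 - v 0 with he2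
  -- surjectivity
  have hsurj : ∀ x, ∃ s t : ℝ, v 0 + s • e1 + t • e2 = x := by
    intro x
    have hli : LinearIndependent ℝ ![e1, e2] := by
      rw [affineIndependent_iff_linearIndependent_vsub ℝ _ (0 : Fin 3),
        ← linearIndependent_equiv (finSuccAboveEquiv (0 : Fin 3))] at hv
      have hfun : ![e1, e2] = (fun i : {x : Fin 3 // x ≠ 0} => v i -ᵥ v 0) ∘
          (finSuccAboveEquiv (0 : Fin 3)) := by
        ext k
        fin_cases k <;> simp [he1, he2, finSuccAboveEquiv_apply]
      rw [hfun]
      exact hv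
    have hsp := hli.span_eq_top_of_card_eq_finrank (by simp)
    have hx : x - v 0 ∈ Submodule.span ℝ (Set.range ![e1, e2]) := by rw [hsp]; trivial
    rw [Matrix.range_cons, Matrix.range_cons, Matrix.range_empty, Set.union_empty,
      Set.singleton_union, Submodule.mem_span_pair] at hx
    obtain ⟨s, t, hst⟩ := hx
    exact ⟨s, t, by rw [add_assoc, hst]; abel⟩
  -- normal form
  obtain ⟨a, ha, hform⟩ : ∃ a : ℕ → ℕ → ℝ, (∀ i j, 5 < i + j → a i j = 0) ∧
      ∀ s t : ℝ, q (v 0 + s • e1 + t • e2) =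
        ∑ j ∈ Finset.range 6, (∑ i ∈ Finset.range 6, a i j * s ^ i) * t ^ j := by
    let g : Fin 2 → MvPolynomial (Fin 2) ℝ := fun k =>
      MvPolynomial.C (v 0 k) + MvPolynomial.C (e1 k) * MvPolynomial.X 0
        + MvPolynomial.C (e2 k) * MvPolynomial.X 1
    have hg : ∀ k, (g k).totalDegree ≤ 1 := by
      intro k
      have hX : ∀ (c : ℝ) (i : Fin 2),
          (MvPolynomial.C c * MvPolynomial.X i : MvPolynomial (Fin 2) ℝ).totalDegree ≤ 1 := by
        intro c i
        refine (MvPolynomial.totalDegree_mul _ _).trans ?_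
        simp
      refine (MvPolynomial.totalDegree_add _ _).trans (max_le ?_ (hX _ _))
      refine (MvPolynomial.totalDegree_add _ _).trans (max_le ?_ (hX _ _))
      simp
    obtain ⟨a, ha, hf⟩ := qv_form _ (qv_subst Q hQ g hg)
    refine ⟨a, ha, fun s t => ?_⟩
    rw [← hf, hqQ, ← MvPolynomial.coe_aeval_eq_eval, ← MvPolynomial.coe_aeval_eq_eval]
    simp only [RingHom.coe_coe]
    rw [MvPolynomial.aeval_bind₁]
    congr 2
    ext k
    simp [g]
    ring
  have hform' : ∀ s t : ℝ, q (v 0 + s • e1 + t • e2) =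
        ∑ i ∈ Finset.range 6, (∑ j ∈ Finset.range 6, a i j * t ^ j) * s ^ i := by
    intro s t
    rw [hform]
    simp only [Finset.sum_mul]
    rw [Finset.sum_comm]
    exact Finset.sum_congr rfl fun i _ => Finset.sum_congr rfl fun j _ => by ring
  have hcs : ∀ s t s0 : ℝ, HasFDerivAt q (0 : (Fin 2 → ℝ) →L[ℝ] ℝ) (v 0 + s • e1 + t • e2) →
      HasDerivAt (fun s => q (v 0 + s • e1 + t • e2)) 0 s := by
    intro s t _ hh
    have h1 : HasDerivAt (fun s : ℝ => v 0 + s • e1 + t • e2) ((1:ℝ) • e1) s :=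
      (((hasDerivAt_id s).smul_const e1).const_add (v 0)).add_const _
    simpa using! hh.comp_hasDerivAt s h1
  have hct : ∀ s t : ℝ, HasFDerivAt q (0 : (Fin 2 → ℝ) →L[ℝ] ℝ) (v 0 + s • e1 + t • e2) →
      HasDerivAt (fun t => q (v 0 + s • e1 + t • e2)) 0 t := by
    intro s t hh
    have h1 : HasDerivAt (fun t : ℝ => v 0 + s • e1 + t • e2) ((1:ℝ) • e2) t :=
      ((hasDerivAt_id t).smul_const e2).const_add (v 0 + s • e1)
    simpa using! hh.comp_hasDerivAt t h1
  have m1 : ∀ s ∈ Set.Icc (0:ℝ) 1, v 0 + s • e1 + (0:ℝ) • e2 ∈ segment ℝ (v 0) (v 1) := by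
    intro s hs
    rw [segment_eq_image']
    exact ⟨s, hs, by simp [he1]⟩
  have m2 : ∀ t ∈ Set.Icc (0:ℝ) 1, v 0 + (0:ℝ) • e1 + t • e2 ∈ segment ℝ (v 0) (v 2) := by
    intro s hs
    rw [segment_eq_image']
    exact ⟨s, hs, by simp [he2]⟩
  have m3 : ∀ t ∈ Set.Icc (0:ℝ) 1, v 0 + (1 - t) • e1 + t • e2 ∈ segment ℝ (v 1) (v 2) := by
    intro t ht
    rw [segment_eq_image']
    refine ⟨t, ht, ?_⟩
    ext k
    simp [he1, he2]
    ring
  have c0 := qv_uni (fun i => a i 0) fun s hs => by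
    have := (h 0 1 (by decide) _ (m1 s hs)).1
    rw [hform] at this
    simpa [Finset.sum_range_succ _ 5, Finset.sum_range_succ _ 4, Finset.sum_range_succ _ 3, Finset.sum_range_succ _ 2, Finset.sum_range_succ _ 1] using this
  have d0 := qv_uni (fun j => a 0 j) fun s hs => by
    have := (h 0 2 (by decide) _ (m2 s hs)).1
    rw [hform'] at this
    simpa [Finset.sum_range_succ _ 5, Finset.sum_range_succ _ 4, Finset.sum_range_succ _ 3, Finset.sum_range_succ _ 2, Finset.sum_range_succ _ 1] using this
  have c1 := qv_uni (fun i => a i 1) fun s hs => by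
    have := hct s 0 (hF 0 1 (by decide) _ (m1 s hs))
    simp only [hform] at this
    exact qv_deriv (fun j => ∑ i ∈ Finset.range 6, a i j * s ^ i) this
  have d1 := qv_uni (fun j => a 1 j) fun t ht => by
    have := hcs 0 t 0 (hF 0 2 (by decide) _ (m2 t ht))
    simp only [hform'] at this
    exact qv_deriv (fun i => ∑ j ∈ Finset.range 6, a i j * t ^ j) this
  have key : ∀ s t : ℝ, q (v 0 + s • e1 + t • e2) =
      s ^ 2 * t ^ 2 * (a 2 2 + a 3 2 * s + a 2 3 * t) := by
    intro s t
    rw [hform]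
    have c0' : ∀ i < 6, a i 0 = 0 := fun i hi => c0 i (Finset.mem_range.2 hi)
    have c1' : ∀ i < 6, a i 1 = 0 := fun i hi => c1 i (Finset.mem_range.2 hi)
    have d0' : ∀ i < 6, a 0 i = 0 := fun i hi => d0 i (Finset.mem_range.2 hi)
    have d1' : ∀ i < 6, a 1 i = 0 := fun i hi => d1 i (Finset.mem_range.2 hi)
    simp [Finset.sum_range_succ, c0', c1', d0', d1', ha]
    ring
  have z1 := (h 1 2 (by decide) _ (m3 (1/2) (by norm_num))).1
  have z2 := (h 1 2 (by decide) _ (m3 (1/3) (by norm_num))).1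
  have z3 := hct _ _ (hF 1 2 (by decide) _ (m3 (1/2) (by norm_num)))
  simp only [key] at z1 z2 z3
  have z4 : HasDerivAt (fun t : ℝ => (1 - 1/2 : ℝ) ^ 2 * t ^ 2 * (a 2 2 + a 3 2 * (1 - 1/2) + a 2 3 * t))
      ((1 - 1/2 : ℝ) ^ 2 * (2 * (1/2)) * (a 2 2 + a 3 2 * (1 - 1/2) + a 2 3 * (1/2))
        + (1 - 1/2 : ℝ) ^ 2 * (1/2) ^ 2 * (a 2 3 * 1)) (1/2) := by
    refine HasDerivAt.mul ?_ (((hasDerivAt_id _).const_mul _).const_add _)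
    simpa using (hasDerivAt_pow 2 (1/2 : ℝ)).const_mul ((1 - 1/2 : ℝ) ^ 2)
  have z5 := z4.unique z3
  have b3 : a 2 3 = 0 := by linarith
  have b2 : a 3 2 = 0 := by linarith
  have b1 : a 2 2 = 0 := by linarith
  intro x
  obtain ⟨s, t, rfl⟩ := hsurj x
  rw [key, b1, b2, b3]
  ring
end

section
/- Let v₀, v₁, v₂ ∈ ℝ² be affinely independent (the vertices of a nondegenerate triangle T with interior of positive area). Let 𝕊 denote symmetric 2×2 real matrices and let τ : ℝ² → 𝕊 be a polynomial matrix field of total degree at most 3 whose row-wise divergence div τ (with (div τ)ᵢ = ∂₁τᵢ₁ + ∂₂τᵢ₂) has total degree at most 1. Suppose: (a) τ(vᵢ) = 0 for i = 0,1,2; (b) for each edge e of T from vertex v to vertex w, with n a nonzero normal vector to e, ∫₀¹ τ((1−t)v + t w)·n dt = 0 and ∫₀¹ t · (τ((1−t)v + t w)·n) dt = 0 (as equations in ℝ²); (c) ∫_T τ(x) dx = 0 (entrywise). Then τ is identically zero. -/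
set_option linter.unusedSimpArgs false
set_option linter.unusedTactic false

namespace AW

/-- explicit cubic -/
def cub (c : Fin 10 → ℝ) (x y : ℝ) : ℝ :=
  c 0 + c 1 * x + c 2 * y + c 3 * x ^ 2 + c 4 * (x * y) + c 5 * y ^ 2
    + c 6 * x ^ 3 + c 7 * (x ^ 2 * y) + c 8 * (x * y ^ 2) + c 9 * y ^ 3

lemma cub_add (c d : Fin 10 → ℝ) (x y : ℝ) : cub (c + d) x y = cub c x y + cub d x y := by
  simp only [cub, Pi.add_apply]; ring

lemma cub_smul (r : ℝ) (c : Fin 10 → ℝ) (x y : ℝ) : cub (r • c) x y = r * cub c x y := by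
  simp only [cub, Pi.smul_apply, smul_eq_mul]; ring

lemma cub_sum {ι : Type*} (s : Finset ι) (c : ι → Fin 10 → ℝ) (x y : ℝ) :
    cub (∑ i ∈ s, c i) x y = ∑ i ∈ s, cub (c i) x y := by
  classical
  induction s using Finset.induction_on with
  | empty => simp [cub]
  | insert a s ha ih => rw [Finset.sum_insert ha, Finset.sum_insert ha, cub_add, ih]

lemma mon_cub (a b : ℕ) (h : a + b ≤ 3) : ∃ c : Fin 10 → ℝ, ∀ x y : ℝ, x ^ a * y ^ b = cub c x y := by
  have ha : a ≤ 3 := by omega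
  have hb : b ≤ 3 := by omega
  have key : ∃ k : Fin 10, ∀ x y : ℝ, x ^ a * y ^ b = cub (Pi.single k 1) x y := by
    interval_cases a <;> interval_cases b <;> first
      | omega
      | (refine ⟨0, fun x y => ?_⟩; simp [cub, Pi.single_apply]; done)
      | (refine ⟨1, fun x y => ?_⟩; simp [cub, Pi.single_apply]; done)
      | (refine ⟨2, fun x y => ?_⟩; simp [cub, Pi.single_apply]; done)
      | (refine ⟨3, fun x y => ?_⟩; simp [cub, Pi.single_apply]; done)
      | (refine ⟨4, fun x y => ?_⟩; simp [cub, Pi.single_apply]; done)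
      | (refine ⟨5, fun x y => ?_⟩; simp [cub, Pi.single_apply]; done)
      | (refine ⟨6, fun x y => ?_⟩; simp [cub, Pi.single_apply]; done)
      | (refine ⟨7, fun x y => ?_⟩; simp [cub, Pi.single_apply]; done)
      | (refine ⟨8, fun x y => ?_⟩; simp [cub, Pi.single_apply]; done)
      | (refine ⟨9, fun x y => ?_⟩; simp [cub, Pi.single_apply]; done)
  obtain ⟨k, hk⟩ := key
  exact ⟨_, hk⟩

lemma supp_deg {n : ℕ} {q : MvPolynomial (Fin 2) ℝ} (hq : q.totalDegree ≤ n) {s : Fin 2 →₀ ℕ}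
    (hs : s ∈ q.support) : s 0 + s 1 ≤ n := by
  have := (MvPolynomial.le_totalDegree hs).trans hq
  rwa [Finsupp.sum_fintype _ _ (fun _ => rfl), Fin.sum_univ_two] at this

lemma poly_cub (q : MvPolynomial (Fin 2) ℝ) (hq : q.totalDegree ≤ 3) :
    ∃ c : Fin 10 → ℝ, ∀ x : Fin 2 → ℝ, MvPolynomial.eval x q = cub c (x 0) (x 1) := by
  have H : ∀ s : Fin 2 →₀ ℕ, ∃ c : Fin 10 → ℝ, s ∈ q.support →
      ∀ x y : ℝ, x ^ (s 0) * y ^ (s 1) = cub c x y := by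
    intro s
    by_cases hs : s ∈ q.support
    · obtain ⟨c, hc⟩ := mon_cub (s 0) (s 1) (supp_deg hq hs)
      exact ⟨c, fun _ => hc⟩
    · exact ⟨0, fun h => absurd h hs⟩
  choose c hc using H
  refine ⟨∑ s ∈ q.support, q.coeff s • c s, fun x => ?_⟩
  rw [MvPolynomial.eval_eq', cub_sum]
  refine Finset.sum_congr rfl fun s hs => ?_
  rw [cub_smul, Fin.prod_univ_two, hc s hs]

lemma poly_aff (q : MvPolynomial (Fin 2) ℝ) (hq : q.totalDegree ≤ 1) :
    ∃ a b c : ℝ, ∀ x : Fin 2 → ℝ, MvPolynomial.eval x q = a + b * x 0 + c * x 1 := by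
  have H : ∀ s : Fin 2 →₀ ℕ, ∃ c : Fin 3 → ℝ, s ∈ q.support →
      ∀ x y : ℝ, x ^ (s 0) * y ^ (s 1) = c 0 + c 1 * x + c 2 * y := by
    intro s
    by_cases hs : s ∈ q.support
    · have h := supp_deg hq hs
      generalize s 0 = a at *
      generalize s 1 = b at *
      have ha : a ≤ 1 := by omega
      have hb : b ≤ 1 := by omega
      interval_cases a <;> interval_cases b
      · exact ⟨![1,0,0], by simp⟩
      · exact ⟨![0,0,1], by simp⟩
      · exact ⟨![0,1,0], by simp⟩
      · omega
    · exact ⟨0, fun h => absurd h hs⟩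
  choose c hc using H
  refine ⟨∑ s ∈ q.support, q.coeff s * c s 0, ∑ s ∈ q.support, q.coeff s * c s 1,
    ∑ s ∈ q.support, q.coeff s * c s 2, fun x => ?_⟩
  rw [MvPolynomial.eval_eq', Finset.sum_mul, Finset.sum_mul, ← Finset.sum_add_distrib,
    ← Finset.sum_add_distrib]
  refine Finset.sum_congr rfl fun s hs => ?_
  rw [Fin.prod_univ_two, hc s hs]; ring

/-- affine map from the reference triangle -/
def F (o p r : Fin 2 → ℝ) (x : Fin 2 → ℝ) : Fin 2 → ℝ := fun i => o i + x 0 * p i + x 1 * r i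

open MvPolynomial in
lemma poly_comp (o p r : Fin 2 → ℝ) (n : ℕ) (q : MvPolynomial (Fin 2) ℝ) (hq : q.totalDegree ≤ n) :
    ∃ q' : MvPolynomial (Fin 2) ℝ, q'.totalDegree ≤ n ∧
      ∀ x, MvPolynomial.eval (F o p r x) q = MvPolynomial.eval x q' := by

  let G : Fin 2 → MvPolynomial (Fin 2) ℝ := fun i => C (o i) + X 0 * C (p i) + X 1 * C (r i)
  have hG : ∀ i, (G i).totalDegree ≤ 1 := by
    intro i
    refine (totalDegree_add _ _).trans (max_le ((totalDegree_add _ _).trans (max_le ?_ ?_)) ?_)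
    · simp
    · exact (totalDegree_mul _ _).trans (by simp)
    · exact (totalDegree_mul _ _).trans (by simp)
  refine ⟨∑ s ∈ q.support, C (q.coeff s) * (G 0 ^ s 0 * G 1 ^ s 1), ?_, fun x => ?_⟩
  · refine (totalDegree_finsetSum _ _).trans (Finset.sup_le fun s hs => ?_)
    have h := supp_deg hq hs
    have h0 := (totalDegree_pow (G 0) (s 0)).trans (Nat.mul_le_mul_left _ (hG 0))
    have h1 := (totalDegree_pow (G 1) (s 1)).trans (Nat.mul_le_mul_left _ (hG 1))
    have h2 := totalDegree_mul (G 0 ^ s 0) (G 1 ^ s 1)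
    have h3 := totalDegree_mul (C (q.coeff s)) (G 0 ^ s 0 * G 1 ^ s 1)
    rw [totalDegree_C] at h3
    omega
  · rw [eval_eq', map_sum]
    refine Finset.sum_congr rfl fun s hs => ?_
    simp [G, F, Fin.prod_univ_two]

lemma ref_solve (a b c : Fin 10 → ℝ)
    (d1 : 3 * a 6 + b 7 = 0) (d2 : a 7 + b 8 = 0) (d3 : a 8 + 3 * b 9 = 0)
    (d4 : 3 * b 6 + c 7 = 0) (d5 : b 7 + c 8 = 0) (d6 : b 8 + 3 * c 9 = 0)
    (va0 : cub a 0 0 = 0) (va1 : cub a 1 0 = 0) (va2 : cub a 0 1 = 0)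
    (vb0 : cub b 0 0 = 0) (vb1 : cub b 1 0 = 0) (vb2 : cub b 0 1 = 0)
    (vc0 : cub c 0 0 = 0) (vc1 : cub c 1 0 = 0) (vc2 : cub c 0 1 = 0)
    (e1 : (∫ t in (0:ℝ)..1, cub b t 0) = 0) (e2 : (∫ t in (0:ℝ)..1, t * cub b t 0) = 0)
    (e3 : (∫ t in (0:ℝ)..1, cub c t 0) = 0) (e4 : (∫ t in (0:ℝ)..1, t * cub c t 0) = 0)
    (e5 : (∫ t in (0:ℝ)..1, cub a 0 t) = 0) (e6 : (∫ t in (0:ℝ)..1, t * cub a 0 t) = 0)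
    (e7 : (∫ t in (0:ℝ)..1, cub b 0 t) = 0) (e8 : (∫ t in (0:ℝ)..1, t * cub b 0 t) = 0)
    (e9 : (∫ t in (0:ℝ)..1, cub (a + b) (1 - t) t) = 0)
    (e10 : (∫ t in (0:ℝ)..1, t * cub (a + b) (1 - t) t) = 0)
    (e11 : (∫ t in (0:ℝ)..1, cub (b + c) (1 - t) t) = 0)
    (e12 : (∫ t in (0:ℝ)..1, t * cub (b + c) (1 - t) t) = 0)
    (ma : (∫ x in (0:ℝ)..1, ∫ y in (0:ℝ)..(1 - x), cub a x y) = 0)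
    (mb : (∫ x in (0:ℝ)..1, ∫ y in (0:ℝ)..(1 - x), cub b x y) = 0)
    (mc : (∫ x in (0:ℝ)..1, ∫ y in (0:ℝ)..(1 - x), cub c x y) = 0) :
    a = 0 ∧ b = 0 ∧ c = 0 := by
  have I1 : ∀ (g : ℝ → ℝ) (k0 k1 k2 k3 k4 : ℝ),
      (∀ t, g t = k0 + k1 * t + k2 * t ^ 2 + k3 * t ^ 3 + k4 * t ^ 4) →
      ∀ u, (∫ t in (0:ℝ)..u, g t)
        = k0 * u + k1 * u ^ 2 / 2 + k2 * u ^ 3 / 3 + k3 * u ^ 4 / 4 + k4 * u ^ 5 / 5 := by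
    intro g k0 k1 k2 k3 k4 hg u
    have : ∀ x ∈ Set.uIcc 0 u, HasDerivAt (fun u : ℝ => k0 * u + k1 * u ^ 2 / 2 + k2 * u ^ 3 / 3
        + k3 * u ^ 4 / 4 + k4 * u ^ 5 / 5) (g x) x := by
      intro x _
      have h := ((((((hasDerivAt_id x).const_mul k0).add
        (((hasDerivAt_pow 2 x).const_mul k1).div_const 2)).add
        (((hasDerivAt_pow 3 x).const_mul k2).div_const 3)).add
        (((hasDerivAt_pow 4 x).const_mul k3).div_const 4)).add
        (((hasDerivAt_pow 5 x).const_mul k4).div_const 5))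
      refine h.congr_deriv ?_
      rw [hg]; push_cast; ring
    rw [intervalIntegral.integral_eq_sub_of_hasDerivAt this]
    · ring
    · have : g = fun t => k0 + k1 * t + k2 * t ^ 2 + k3 * t ^ 3 + k4 * t ^ 4 := funext hg
      rw [this]
      exact Continuous.intervalIntegrable (by fun_prop) _ _
  have J1 : ∀ c : Fin 10 → ℝ, (∫ t in (0:ℝ)..1, cub c t 0) = c 0 + c 1 / 2 + c 3 / 3 + c 6 / 4 := by
    intro c
    rw [I1 _ (c 0) (c 1) (c 3) (c 6) 0 (fun t => by simp only [cub]; ring)]; ring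
  have J2 : ∀ c : Fin 10 → ℝ, (∫ t in (0:ℝ)..1, t * cub c t 0)
      = c 0 / 2 + c 1 / 3 + c 3 / 4 + c 6 / 5 := by
    intro c
    rw [I1 _ 0 (c 0) (c 1) (c 3) (c 6) (fun t => by simp only [cub]; ring)]; ring
  have J3 : ∀ c : Fin 10 → ℝ, (∫ t in (0:ℝ)..1, cub c 0 t) = c 0 + c 2 / 2 + c 5 / 3 + c 9 / 4 := by
    intro c
    rw [I1 _ (c 0) (c 2) (c 5) (c 9) 0 (fun t => by simp only [cub]; ring)]; ring
  have J4 : ∀ c : Fin 10 → ℝ, (∫ t in (0:ℝ)..1, t * cub c 0 t)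
      = c 0 / 2 + c 2 / 3 + c 5 / 4 + c 9 / 5 := by
    intro c
    rw [I1 _ 0 (c 0) (c 2) (c 5) (c 9) (fun t => by simp only [cub]; ring)]; ring
  have J5 : ∀ c : Fin 10 → ℝ, (∫ t in (0:ℝ)..1, cub c (1 - t) t)
      = c 0 + c 1 / 2 + c 2 / 2 + c 3 / 3 + c 4 / 6 + c 5 / 3 + c 6 / 4 + c 7 / 12 + c 8 / 12
        + c 9 / 4 := by
    intro c
    rw [I1 _ (c 0 + c 1 + c 3 + c 6) (- c 1 + c 2 - 2 * c 3 + c 4 - 3 * c 6 + c 7)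
      (c 3 - c 4 + c 5 + 3 * c 6 - 2 * c 7 + c 8) (- c 6 + c 7 - c 8 + c 9) 0
      (fun t => by simp only [cub]; ring)]; ring
  have J6 : ∀ c : Fin 10 → ℝ, (∫ t in (0:ℝ)..1, t * cub c (1 - t) t)
      = c 0 / 2 + c 1 / 6 + c 2 / 3 + c 3 / 12 + c 4 / 12 + c 5 / 4 + c 6 / 20 + c 7 / 30
        + c 8 / 20 + c 9 / 5 := by
    intro c
    rw [I1 _ 0 (c 0 + c 1 + c 3 + c 6) (- c 1 + c 2 - 2 * c 3 + c 4 - 3 * c 6 + c 7)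
      (c 3 - c 4 + c 5 + 3 * c 6 - 2 * c 7 + c 8) (- c 6 + c 7 - c 8 + c 9)
      (fun t => by simp only [cub]; ring)]; ring
  have J7 : ∀ c : Fin 10 → ℝ, (∫ x in (0:ℝ)..1, ∫ y in (0:ℝ)..(1 - x), cub c x y)
      = c 0 / 2 + c 1 / 6 + c 2 / 6 + c 3 / 12 + c 4 / 24 + c 5 / 12 + c 6 / 20 + c 7 / 60
        + c 8 / 60 + c 9 / 20 := by
    intro c
    have hin : ∀ x : ℝ, (∫ y in (0:ℝ)..(1 - x), cub c x y) =
        (c 0 + c 1 * x + c 3 * x ^ 2 + c 6 * x ^ 3) * (1 - x)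
        + (c 2 + c 4 * x + c 7 * x ^ 2) * (1 - x) ^ 2 / 2
        + (c 5 + c 8 * x) * (1 - x) ^ 3 / 3 + c 9 * (1 - x) ^ 4 / 4 := by
      intro x
      rw [I1 _ (c 0 + c 1 * x + c 3 * x ^ 2 + c 6 * x ^ 3) (c 2 + c 4 * x + c 7 * x ^ 2)
        (c 5 + c 8 * x) (c 9) 0 (fun t => by simp only [cub]; ring)]; ring
    simp only [hin]
    rw [I1 _ (c 0 + c 2 / 2 + c 5 / 3 + c 9 / 4)
      (c 1 - c 0 + c 4 / 2 - c 2 + c 8 / 3 - c 5 - c 9)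
      (c 3 - c 1 + c 7 / 2 - c 4 + c 2 / 2 - c 8 + c 5 + 3 * c 9 / 2)
      (c 6 - c 3 - c 7 + c 4 / 2 + c 8 - c 5 / 3 - c 9)
      (- c 6 + c 7 / 2 - c 8 / 3 + c 9 / 4) (fun t => by ring)]
    ring
  simp only [J1, J2, J3, J4, J5, J6, J7, Pi.add_apply] at *
  simp only [cub] at *
  clear I1 J1 J2 J3 J4 J5 J6 J7
  norm_num at va0 va1 va2 vb0 vb1 vb2 vc0 vc1 vc2
  have edge : ∀ k0 k1 k2 k3 : ℝ, k0 = 0 → k0 + k1 + k2 + k3 = 0 →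
      k0 + k1 / 2 + k2 / 3 + k3 / 4 = 0 → k0 / 2 + k1 / 3 + k2 / 4 + k3 / 5 = 0 →
      k1 = 0 ∧ k2 = 0 ∧ k3 = 0 := by
    intro k0 k1 k2 k3 h0 h1 h2 h3
    refine ⟨?_, ?_, ?_⟩ <;> linarith
  obtain ⟨b1, b3, b6⟩ := edge _ _ _ _ vb0 vb1 e1 e2
  obtain ⟨c1, c3, c6⟩ := edge _ _ _ _ vc0 vc1 e3 e4
  obtain ⟨a2, a5, a9⟩ := edge _ _ _ _ va0 va2 e5 e6
  obtain ⟨b2, b5, b9⟩ := edge _ _ _ _ vb0 vb2 e7 e8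
  simp only [va0, vb0, vc0, b1, b3, b6, c1, c3, c6, a2, a5, a9, b2, b5, b9, mul_zero, zero_add,
    add_zero, zero_div] at d1 d2 d3 d4 d5 d6 e9 e10 e11 e12 ma mb mc va1 vc2
  refine ⟨funext fun i => ?_, funext fun i => ?_, funext fun i => ?_⟩ <;>
  · simp only [Pi.zero_apply]
    fin_cases i <;> simp only [Fin.reduceFinMk, Fin.zero_eta, Fin.mk_one] <;>
      first | assumption | linarith

end AW

namespace AW
open MeasureTheory

lemma pd2_cub0 (c : Fin 10 → ℝ) (x : Fin 2 → ℝ) :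
    pd2 0 (fun x => cub c (x 0) (x 1)) x = c 1 + 2 * c 3 * x 0 + c 4 * x 1 + 3 * c 6 * x 0 ^ 2
      + 2 * c 7 * (x 0 * x 1) + c 8 * x 1 ^ 2 ∧
    pd2 1 (fun x => cub c (x 0) (x 1)) x = c 2 + c 4 * x 0 + 2 * c 5 * x 1 + c 7 * x 0 ^ 2
      + 2 * c 8 * (x 0 * x 1) + 3 * c 9 * x 1 ^ 2 := by
  have h0 : HasFDerivAt (fun x : Fin 2 → ℝ => x 0)
    (ContinuousLinearMap.proj (R := ℝ) (φ := fun _ : Fin 2 => ℝ) 0) x := hasFDerivAt_apply 0 x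
  have h1 : HasFDerivAt (fun x : Fin 2 → ℝ => x 1)
    (ContinuousLinearMap.proj (R := ℝ) (φ := fun _ : Fin 2 => ℝ) 1) x := hasFDerivAt_apply 1 x
  have h := (((((((((hasFDerivAt_const (c 0) x).add (h0.const_mul (c 1))).add
    (h1.const_mul (c 2))).add ((h0.pow 2).const_mul (c 3))).add
    ((h0.mul h1).const_mul (c 4))).add ((h1.pow 2).const_mul (c 5))).add
    ((h0.pow 3).const_mul (c 6))).add (((h0.pow 2).mul h1).const_mul (c 7))).add
    ((h0.mul (h1.pow 2)).const_mul (c 8))).add ((h1.pow 3).const_mul (c 9))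
  have h' : HasFDerivAt (fun x : Fin 2 → ℝ => cub c (x 0) (x 1)) _ x := h
  unfold pd2
  rw [h'.fderiv]
  constructor
  · simp
    ring
  · simp
    ring

/-- linear part -/
noncomputable def L (p r : Fin 2 → ℝ) : (Fin 2 → ℝ) →L[ℝ] (Fin 2 → ℝ) :=
  (Matrix.toLin' !![p 0, r 0; p 1, r 1]).toContinuousLinearMap

lemma L_apply (p r x : Fin 2 → ℝ) (i : Fin 2) : L p r x i = x 0 * p i + x 1 * r i := by
  fin_cases i <;> simp [L, Matrix.mulVec, dotProduct, Fin.sum_univ_two] <;> ring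

lemma L_det (p r : Fin 2 → ℝ) : (L p r).det = p 0 * r 1 - r 0 * p 1 := by
  simp [L, ContinuousLinearMap.det, LinearMap.det_toLin', Matrix.det_fin_two]

lemma F_deriv (o p r x : Fin 2 → ℝ) : HasFDerivAt (F o p r) (L p r) x := by
  have : F o p r = fun x => o + L p r x := by
    funext x i
    simp [F, L_apply, add_assoc]
  rw [this]
  exact (L p r).hasFDerivAt.const_add o

lemma pd2_comp (o p r : Fin 2 → ℝ) (f : (Fin 2 → ℝ) → ℝ) (hf : Differentiable ℝ f) (x : Fin 2 → ℝ) :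
    pd2 0 (fun x => f (F o p r x)) x
      = p 0 * pd2 0 f (F o p r x) + p 1 * pd2 1 f (F o p r x) ∧
    pd2 1 (fun x => f (F o p r x)) x
      = r 0 * pd2 0 f (F o p r x) + r 1 * pd2 1 f (F o p r x) := by
  have h : HasFDerivAt (fun x => f (F o p r x)) _ x :=
    (hf (F o p r x)).hasFDerivAt.comp x (F_deriv o p r x)
  have e : ∀ w : Fin 2 → ℝ, w = w 0 • Pi.single 0 1 + w 1 • Pi.single 1 1 := by
    intro w; funext i; fin_cases i <;> simp
  have e0 : L p r (Pi.single 0 1) = p := by funext i; simp [L_apply]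
  have e1 : L p r (Pi.single 1 1) = r := by funext i; simp [L_apply]
  unfold pd2
  rw [h.fderiv]
  simp only [ContinuousLinearMap.comp_apply, e0, e1]
  generalize fderiv ℝ f (F o p r x) = D
  constructor
  · conv_lhs => rw [e p]
    simp only [map_add, map_smul, smul_eq_mul]
  · conv_lhs => rw [e r]
    simp only [map_add, map_smul, smul_eq_mul]

lemma pd2_lin (i : Fin 2) (A B C : ℝ) (f g h : (Fin 2 → ℝ) → ℝ) (x : Fin 2 → ℝ)
    (hf : Differentiable ℝ f) (hg : Differentiable ℝ g) (hh : Differentiable ℝ h) :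
    pd2 i (fun x => A * f x + B * g x + C * h x) x = A * pd2 i f x + B * pd2 i g x + C * pd2 i h x := by
  have H := (((hf x).hasFDerivAt.const_mul A).add ((hg x).hasFDerivAt.const_mul B)).add
    ((hh x).hasFDerivAt.const_mul C)
  have H' : HasFDerivAt (fun x => A * f x + B * g x + C * h x) _ x := H
  unfold pd2
  rw [H'.fderiv]
  simp

/-- reference triangle -/
def T : Set (Fin 2 → ℝ) := {x | 0 ≤ x 0 ∧ 0 ≤ x 1 ∧ x 0 + x 1 ≤ 1}

/-- reference triangle in the product -/
def S : Set (ℝ × ℝ) := {x | 0 ≤ x.1 ∧ 0 ≤ x.2 ∧ x.1 + x.2 ≤ 1}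

lemma S_closed : IsClosed S := by
  refine (isClosed_le continuous_const continuous_fst).inter
    ((isClosed_le continuous_const continuous_snd).inter
      (isClosed_le (continuous_fst.add continuous_snd) continuous_const))

lemma S_compact : IsCompact S := by
  refine (isCompact_Icc (a := ((0:ℝ),(0:ℝ))) (b := (1,1))).of_isClosed_subset S_closed ?_
  rintro ⟨x, y⟩ ⟨h1, h2, h3⟩
  simp only at h1 h2 h3
  exact ⟨⟨h1, h2⟩, ⟨by simp only; linarith, by simp only; linarith⟩⟩

lemma T_eq : T = MeasurableEquiv.finTwoArrow ⁻¹' S := by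
  ext x; simp [T, S, MeasurableEquiv.finTwoArrow]

lemma T_meas : MeasurableSet T := by
  rw [T_eq]; exact MeasurableEquiv.finTwoArrow.measurable S_closed.measurableSet

lemma int_T (f : ℝ → ℝ → ℝ) (hf : Continuous (fun z : ℝ × ℝ => f z.1 z.2)) :
    (∫ x in T, f (x 0) (x 1)) = ∫ x in (0:ℝ)..1, ∫ y in (0:ℝ)..(1 - x), f x y := by
  have h1 : (∫ x in T, f (x 0) (x 1)) = ∫ z in S, f z.1 z.2 := by
    rw [T_eq]
    exact (volume_preserving_finTwoArrow ℝ).setIntegral_preimage_emb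
      (MeasurableEquiv.measurableEmbedding _) (fun z => f z.1 z.2) S
  have hi : Integrable (S.indicator fun z : ℝ × ℝ => f z.1 z.2) := by
    rw [integrable_indicator_iff S_closed.measurableSet]
    exact hf.continuousOn.integrableOn_compact S_compact
  rw [h1, ← integral_indicator S_closed.measurableSet, Measure.volume_eq_prod, integral_prod _ hi,
    intervalIntegral.integral_of_le zero_le_one, ← integral_Icc_eq_integral_Ioc,
    ← integral_indicator measurableSet_Icc]
  congr 1
  funext x
  by_cases hx : x ∈ Set.Icc (0:ℝ) 1
  · rw [Set.indicator_of_mem hx, intervalIntegral.integral_of_le (by linarith [hx.2]),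
      ← integral_Icc_eq_integral_Ioc, ← integral_indicator measurableSet_Icc]
    congr 1
    funext y
    by_cases hy : y ∈ Set.Icc (0:ℝ) (1 - x)
    · rw [Set.indicator_of_mem hy, Set.indicator_of_mem]
      exact ⟨hx.1, hy.1, by simp only; linarith [hy.2]⟩
    · rw [Set.indicator_of_notMem hy, Set.indicator_of_notMem]
      rintro ⟨_, h2, h3⟩
      simp only at h2 h3
      exact hy ⟨h2, by linarith⟩
  · rw [Set.indicator_of_notMem hx]
    have : ∀ y, S.indicator (fun z : ℝ × ℝ => f z.1 z.2) (x, y) = 0 := by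
      intro y
      rw [Set.indicator_of_notMem]
      rintro ⟨h1, h2, h3⟩
      simp only at h1 h2 h3
      exact hx ⟨h1, by linarith⟩
    simp [this]

lemma hull_eq (v : Fin 3 → Fin 2 → ℝ) :
    convexHull ℝ (Set.range v) = F (v 0) (v 1 - v 0) (v 2 - v 0) '' T := by
  apply Set.Subset.antisymm
  · refine convexHull_min ?_ ?_
    · rintro _ ⟨i, rfl⟩
      fin_cases i
      · refine ⟨![0, 0], by simp [T], ?_⟩
        funext j; simp [F]
      · refine ⟨![1, 0], by simp [T], ?_⟩
        funext j; simp [F]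
      · refine ⟨![0, 1], by simp [T], ?_⟩
        funext j; simp [F]
    · rintro _ ⟨x, ⟨hx0, hx1, hx2⟩, rfl⟩ _ ⟨y, ⟨hy0, hy1, hy2⟩, rfl⟩ s t hs ht hst
      refine ⟨s • x + t • y, ⟨?_, ?_, ?_⟩, ?_⟩
      · simp only [Pi.add_apply, Pi.smul_apply, smul_eq_mul]; positivity
      · simp only [Pi.add_apply, Pi.smul_apply, smul_eq_mul]; positivity
      · simp only [Pi.add_apply, Pi.smul_apply, smul_eq_mul]; nlinarith
      · funext j
        simp only [F, Pi.add_apply, Pi.smul_apply, smul_eq_mul, Pi.sub_apply]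
        linear_combination (-v 0 j) * hst
  · rintro _ ⟨x, ⟨hx0, hx1, hx2⟩, rfl⟩
    have := (convex_convexHull ℝ (Set.range v)).sum_mem (t := Finset.univ)
      (w := ![1 - x 0 - x 1, x 0, x 1]) (z := v)
      (by intro i _; fin_cases i <;> simp <;> linarith)
      (by simp [Fin.sum_univ_three]; try ring)
      (fun i _ => subset_convexHull ℝ _ ⟨i, rfl⟩)
    convert this using 1
    funext j
    simp [Fin.sum_univ_three, F]
    ring

lemma F_inv (o p r : Fin 2 → ℝ) (hd : p 0 * r 1 - r 0 * p 1 ≠ 0) (y : Fin 2 → ℝ) :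
    ∃ x, F o p r x = y := by
  refine ⟨![((y 0 - o 0) * r 1 - (y 1 - o 1) * r 0) / (p 0 * r 1 - r 0 * p 1),
    ((y 1 - o 1) * p 0 - (y 0 - o 0) * p 1) / (p 0 * r 1 - r 0 * p 1)], ?_⟩
  generalize hD : p 0 * r 1 - r 0 * p 1 = D at *
  funext i
  fin_cases i <;> simp [F] <;> field_simp <;> rw [← hD] <;> ring

lemma F_inj (o p r : Fin 2 → ℝ) (hd : p 0 * r 1 - r 0 * p 1 ≠ 0) : Function.Injective (F o p r) := by
  intro x y h
  have h0 := congrFun h 0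
  have h1 := congrFun h 1
  simp only [F] at h0 h1
  funext i
  fin_cases i
  · apply mul_right_cancel₀ hd
    simp only [Fin.zero_eta]
    linear_combination r 1 * h0 - r 0 * h1
  · apply mul_right_cancel₀ hd
    simp only [Fin.mk_one]
    linear_combination p 0 * h1 - p 1 * h0

lemma int_hull (v : Fin 3 → Fin 2 → ℝ)
    (hd : (v 1 - v 0) 0 * (v 2 - v 0) 1 - (v 2 - v 0) 0 * (v 1 - v 0) 1 ≠ 0)
    (g : (Fin 2 → ℝ) → ℝ) (c : Fin 10 → ℝ)
    (hg : ∀ x, g (F (v 0) (v 1 - v 0) (v 2 - v 0) x) = cub c (x 0) (x 1))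
    (h : (∫ x in convexHull ℝ (Set.range v), g x) = 0) :
    (∫ x in (0:ℝ)..1, ∫ y in (0:ℝ)..(1 - x), cub c x y) = 0 := by
  rw [hull_eq, integral_image_eq_integral_abs_det_fderiv_smul volume T_meas
    (fun x _ => (F_deriv _ _ _ x).hasFDerivWithinAt) ((F_inj _ _ _ hd).injOn)] at h
  simp only [L_det, hg] at h
  rw [integral_smul, smul_eq_mul, mul_eq_zero, abs_eq_zero] at h
  rw [← int_T (cub c) (by unfold cub; fun_prop)]
  exact h.resolve_left hd

lemma det_ne (v : Fin 3 → Fin 2 → ℝ) (hv : AffineIndependent ℝ v) :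
    (v 1 - v 0) 0 * (v 2 - v 0) 1 - (v 2 - v 0) 0 * (v 1 - v 0) 1 ≠ 0 := by
  intro hd
  rw [affineIndependent_iff] at hv
  have key : ∀ a b : ℝ, a * (v 1 - v 0) 0 + b * (v 2 - v 0) 0 = 0 →
      a * (v 1 - v 0) 1 + b * (v 2 - v 0) 1 = 0 → a = 0 ∧ b = 0 := by
    intro a b h0 h1
    have := hv Finset.univ ![-a - b, a, b] (by simp [Fin.sum_univ_three]; try ring) (by
      simp only [Pi.sub_apply] at h0 h1
      funext j
      fin_cases j
      · simp [Fin.sum_univ_three]; linarith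
      · simp [Fin.sum_univ_three]; linarith)
    exact ⟨by simpa using this 1 (Finset.mem_univ _), by simpa using this 2 (Finset.mem_univ _)⟩
  obtain ⟨r1, p1⟩ := key ((v 2 - v 0) 1) (-(v 1 - v 0) 1) (by linarith) (by ring)
  obtain ⟨r0, p0⟩ := key ((v 2 - v 0) 0) (-(v 1 - v 0) 0) (by ring) (by linarith)
  have := key 1 0 (by linarith) (by linarith)
  simp at this

lemma vec_int (G : ℝ → Fin 2 → ℝ) (hG : Continuous G) (w0 w1 : ℝ) (h : (∫ t in (0:ℝ)..1, G t) = 0) :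
    (∫ t in (0:ℝ)..1, (w0 * G t 0 + w1 * G t 1)) = 0 := by
  let φ : (Fin 2 → ℝ) →L[ℝ] ℝ := w0 • ContinuousLinearMap.proj (R := ℝ) (φ := fun _ : Fin 2 => ℝ) 0
    + w1 • ContinuousLinearMap.proj (R := ℝ) (φ := fun _ : Fin 2 => ℝ) 1
  have := φ.intervalIntegral_comp_comm (hG.intervalIntegrable (μ := volume) 0 1)
  rw [h, map_zero] at this
  simpa [φ] using this

end AW

/-- Unisolvence of the 24 degrees of freedom of the lowest order Arnold–Winther
mixed finite element for planar elasticity: a shape function whose vertex values,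
edge moments of degree 0 and 1 of the normal traction, and entrywise mean over the
triangle all vanish is identically zero. -/
theorem arnold_winther_unisolvence
    (v : Fin 3 → Fin 2 → ℝ) (hv : AffineIndependent ℝ v)
    (τ : (Fin 2 → ℝ) → Matrix (Fin 2) (Fin 2) ℝ)
    (hsymm : ∀ x, (τ x).IsSymm)
    (hpoly : τ ∈ PolyMat2 3)
    (hdiv : (fun x i => divRow τ x i) ∈ PolyVF2 1)
    -- (a) vertex values vanish
    (ha : ∀ i, τ (v i) = 0)
    -- (b) moments of degree 0 and 1 of the normal traction τn vanish on each edge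
    (hb : ∀ i j : Fin 3, i ≠ j → ∀ n : Fin 2 → ℝ, n ≠ 0 →
      (∑ k, n k * (v j - v i) k) = 0 →
      (∫ t in (0:ℝ)..1, (τ ((1 - t) • v i + t • v j)).mulVec n) = 0 ∧
      (∫ t in (0:ℝ)..1, t • (τ ((1 - t) • v i + t • v j)).mulVec n) = 0)
    -- (c) the entrywise mean over the triangle vanishes
    (hc : ∀ i j : Fin 2, (∫ x in convexHull ℝ (Set.range v), τ x i j) = 0) :
    ∀ x, τ x = 0 := by
  obtain ⟨q, hq, hτ⟩ := hpoly
  obtain ⟨ℓ, hℓ, hdv⟩ := hdiv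
  have hd := AW.det_ne v hv
  have hmul : ∀ x n i, (τ x).mulVec n i = τ x i 0 * n 0 + τ x i 1 * n 1 := by
    intro x n i; simp [Matrix.mulVec, dotProduct, Fin.sum_univ_two]
  have hs : ∀ x, τ x 1 0 = τ x 0 1 := fun x => (hsymm x).apply 0 1
  have hcd : ∀ i j, ∃ c : Fin 10 → ℝ, ∀ x : Fin 2 → ℝ, τ x i j = AW.cub c (x 0) (x 1) := by
    intro i j
    obtain ⟨c, hc⟩ := AW.poly_cub (q i j) (hq i j)
    exact ⟨c, fun x => by rw [hτ, hc]⟩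
  have hdiff : ∀ i j, Differentiable ℝ (fun x => τ x i j) := by
    intro i j
    obtain ⟨c, hc⟩ := hcd i j
    simp only [hc]
    unfold AW.cub
    fun_prop
  have hcont : ∀ i j, Continuous (fun x => τ x i j) := fun i j => (hdiff i j).continuous
  have hedge : ∀ i j : Fin 3, i ≠ j → ∀ n : Fin 2 → ℝ, n ≠ 0 →
      (∑ k, n k * (v j - v i) k) = 0 → ∀ (w0 w1 : ℝ) (f : ℝ → ℝ),
      (∀ t : ℝ, ∀ y, y = (1 - t) • v i + t • v j → w0 * (τ y 0 0 * n 0 + τ y 0 1 * n 1)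
        + w1 * (τ y 0 1 * n 0 + τ y 1 1 * n 1) = f t) →
      (∫ t in (0:ℝ)..1, f t) = 0 ∧ (∫ t in (0:ℝ)..1, t * f t) = 0 := by
    intro i j hij n hn hn' w0 w1 f hf
    obtain ⟨h1, h2⟩ := hb i j hij n hn hn'
    have hG : Continuous (fun t : ℝ => (τ ((1 - t) • v i + t • v j)).mulVec n) := by
      refine continuous_pi fun k => ?_
      simp only [hmul]
      have hl : Continuous (fun t : ℝ => (1 - t) • v i + t • v j) := by fun_prop
      exact (((hcont k 0).comp hl).mul continuous_const).add
        (((hcont k 1).comp hl).mul continuous_const)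
    have k1 := AW.vec_int _ hG w0 w1 h1
    have k2 := AW.vec_int _ (continuous_id.smul hG) w0 w1 h2
    constructor
    · rw [← k1]
      congr 1
      funext t
      rw [← hf t _ rfl, hmul, hmul, hs]
    · rw [← k2]
      congr 1
      funext t
      show t * f t = w0 * (t * (τ ((1 - t) • v i + t • v j)).mulVec n 0)
        + w1 * (t * (τ ((1 - t) • v i + t • v j)).mulVec n 1)
      rw [← hf t _ rfl, hmul, hmul, hs]
      ring
  have hint : ∀ i j, MeasureTheory.IntegrableOn (fun x => τ x i j) (convexHull ℝ (Set.range v)) := by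
    intro i j
    exact (hcont i j).continuousOn.integrableOn_compact
      ((Set.finite_range v).isCompact_convexHull ℝ)
  have hcomb : ∀ A B C : ℝ,
      (∫ x in convexHull ℝ (Set.range v), (A * τ x 0 0 + B * τ x 0 1 + C * τ x 1 1)) = 0 := by
    intro A B C
    rw [MeasureTheory.integral_add, MeasureTheory.integral_add, MeasureTheory.integral_const_mul,
      MeasureTheory.integral_const_mul, MeasureTheory.integral_const_mul, hc, hc, hc]
    · simp
    · exact (hint 0 0).const_mul A
    · exact (hint 0 1).const_mul B
    · exact ((hint 0 0).const_mul A).add ((hint 0 1).const_mul B)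
    · exact (hint 1 1).const_mul C
  have hp0 : v 1 = v 0 + (v 1 - v 0) := by abel
  have hr0 : v 2 = v 0 + (v 2 - v 0) := by abel
  have hmean : ∀ (A B C : ℝ) (c : Fin 10 → ℝ),
      (∀ x, A * τ (AW.F (v 0) (v 1 - v 0) (v 2 - v 0) x) 0 0
        + B * τ (AW.F (v 0) (v 1 - v 0) (v 2 - v 0) x) 0 1
        + C * τ (AW.F (v 0) (v 1 - v 0) (v 2 - v 0) x) 1 1 = AW.cub c (x 0) (x 1)) →
      (∫ x in (0:ℝ)..1, ∫ y in (0:ℝ)..(1 - x), AW.cub c x y) = 0 := by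
    intro A B C c h
    exact AW.int_hull v hd (fun x => A * τ x 0 0 + B * τ x 0 1 + C * τ x 1 1) c h (hcomb A B C)
  generalize hp : v 1 - v 0 = p at *
  generalize hr : v 2 - v 0 = r at *
  generalize ho : v 0 = o at *
  have hcF : ∀ i j, ∃ c : Fin 10 → ℝ, ∀ x : Fin 2 → ℝ,
      τ (AW.F o p r x) i j = AW.cub c (x 0) (x 1) := by
    intro i j
    obtain ⟨q', hq', h'⟩ := AW.poly_comp o p r 3 (q i j) (hq i j)
    obtain ⟨c, hc⟩ := AW.poly_cub q' hq'
    exact ⟨c, fun x => by rw [hτ, h', hc]⟩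
  have hdF : ∀ i, ∃ a b c : ℝ, ∀ x : Fin 2 → ℝ,
      divRow τ (AW.F o p r x) i = a + b * x 0 + c * x 1 := by
    intro i
    obtain ⟨q', hq', h'⟩ := AW.poly_comp o p r 1 (ℓ i) (hℓ i)
    obtain ⟨a, b, c, hc⟩ := AW.poly_aff q' hq'
    exact ⟨a, b, c, fun x => by rw [← hc, ← h', ← hdv]⟩
  obtain ⟨c00, h00⟩ := hcF 0 0
  obtain ⟨c01, h01⟩ := hcF 0 1
  obtain ⟨c11, h11⟩ := hcF 1 1
  have hcl : ∀ A B C : ℝ, ∀ x : Fin 2 → ℝ, AW.cub (A • c00 + B • c01 + C • c11) (x 0) (x 1)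
      = A * τ (AW.F o p r x) 0 0 + B * τ (AW.F o p r x) 0 1 + C * τ (AW.F o p r x) 1 1 := by
    intro A B C x
    rw [AW.cub_add, AW.cub_add, AW.cub_smul, AW.cub_smul, AW.cub_smul, h00, h01, h11]
  have hclpd : ∀ A B C : ℝ, ∀ x : Fin 2 → ℝ,
      pd2 0 (fun x => AW.cub (A • c00 + B • c01 + C • c11) (x 0) (x 1)) x
      = A * (p 0 * pd2 0 (fun y => τ y 0 0) (AW.F o p r x) + p 1 * pd2 1 (fun y => τ y 0 0) (AW.F o p r x))
      + B * (p 0 * pd2 0 (fun y => τ y 0 1) (AW.F o p r x) + p 1 * pd2 1 (fun y => τ y 0 1) (AW.F o p r x))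
      + C * (p 0 * pd2 0 (fun y => τ y 1 1) (AW.F o p r x) + p 1 * pd2 1 (fun y => τ y 1 1) (AW.F o p r x))
      ∧ pd2 1 (fun x => AW.cub (A • c00 + B • c01 + C • c11) (x 0) (x 1)) x
      = A * (r 0 * pd2 0 (fun y => τ y 0 0) (AW.F o p r x) + r 1 * pd2 1 (fun y => τ y 0 0) (AW.F o p r x))
      + B * (r 0 * pd2 0 (fun y => τ y 0 1) (AW.F o p r x) + r 1 * pd2 1 (fun y => τ y 0 1) (AW.F o p r x))
      + C * (r 0 * pd2 0 (fun y => τ y 1 1) (AW.F o p r x) + r 1 * pd2 1 (fun y => τ y 1 1) (AW.F o p r x)) := by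
    intro A B C x
    have hF : Differentiable ℝ (AW.F o p r) := fun x => (AW.F_deriv o p r x).differentiableAt
    simp only [hcl]
    constructor
    · refine (AW.pd2_lin 0 A B C _ _ _ x ((hdiff 0 0).comp hF) ((hdiff 0 1).comp hF) ((hdiff 1 1).comp hF)).trans ?_
      rw [← (AW.pd2_comp o p r _ (hdiff 0 0) x).1, ← (AW.pd2_comp o p r _ (hdiff 0 1) x).1,
        ← (AW.pd2_comp o p r _ (hdiff 1 1) x).1]
      rfl
    · refine (AW.pd2_lin 1 A B C _ _ _ x ((hdiff 0 0).comp hF) ((hdiff 0 1).comp hF) ((hdiff 1 1).comp hF)).trans ?_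
      rw [← (AW.pd2_comp o p r _ (hdiff 0 0) x).2, ← (AW.pd2_comp o p r _ (hdiff 0 1) x).2,
        ← (AW.pd2_comp o p r _ (hdiff 1 1) x).2]
      rfl
  have hdiv0 : ∀ y, divRow τ y 0 = pd2 0 (fun y => τ y 0 0) y + pd2 1 (fun y => τ y 0 1) y :=
    fun y => rfl
  have hdiv1 : ∀ y, divRow τ y 1 = pd2 0 (fun y => τ y 0 1) y + pd2 1 (fun y => τ y 1 1) y := by
    intro y
    simp only [divRow, hs]
  obtain ⟨l0, l1, l2, hl⟩ := hdF 0
  obtain ⟨m0, m1, m2, hm⟩ := hdF 1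
  obtain ⟨a, ha'⟩ : ∃ a, a = (r 1 ^ 2) • c00 + (-2 * r 0 * r 1) • c01 + (r 0 ^ 2) • c11 := ⟨_, rfl⟩
  obtain ⟨b, hb'⟩ : ∃ b, b = (-(r 1 * p 1)) • c00 + (r 1 * p 0 + r 0 * p 1) • c01
    + (-(r 0 * p 0)) • c11 := ⟨_, rfl⟩
  obtain ⟨c, hc'⟩ : ∃ c, c = (p 1 ^ 2) • c00 + (-2 * p 0 * p 1) • c01 + (p 0 ^ 2) • c11 := ⟨_, rfl⟩
  have hA := hcl (r 1 ^ 2) (-2 * r 0 * r 1) (r 0 ^ 2)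
  have hB := hcl (-(r 1 * p 1)) (r 1 * p 0 + r 0 * p 1) (-(r 0 * p 0))
  have hC := hcl (p 1 ^ 2) (-2 * p 0 * p 1) (p 0 ^ 2)
  have hA' := hclpd (r 1 ^ 2) (-2 * r 0 * r 1) (r 0 ^ 2)
  have hB' := hclpd (-(r 1 * p 1)) (r 1 * p 0 + r 0 * p 1) (-(r 0 * p 0))
  have hC' := hclpd (p 1 ^ 2) (-2 * p 0 * p 1) (p 0 ^ 2)
  rw [← ha'] at hA hA'
  rw [← hb'] at hB hB'
  rw [← hc'] at hC hC'
  have D1 : ∀ x : Fin 2 → ℝ, pd2 0 (fun x => AW.cub a (x 0) (x 1)) x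
      + pd2 1 (fun x => AW.cub b (x 0) (x 1)) x
      = (p 0 * r 1 - r 0 * p 1) * (r 1 * (l0 + l1 * x 0 + l2 * x 1)
        - r 0 * (m0 + m1 * x 0 + m2 * x 1)) := by
    intro x
    rw [(hA' x).1, (hB' x).2, ← hl, ← hm, hdiv0, hdiv1]
    ring
  have D2 : ∀ x : Fin 2 → ℝ, pd2 0 (fun x => AW.cub b (x 0) (x 1)) x
      + pd2 1 (fun x => AW.cub c (x 0) (x 1)) x
      = (p 0 * r 1 - r 0 * p 1) * (p 0 * (m0 + m1 * x 0 + m2 * x 1)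
        - p 1 * (l0 + l1 * x 0 + l2 * x 1)) := by
    intro x
    rw [(hB' x).1, (hC' x).2, ← hl, ← hm, hdiv0, hdiv1]
    ring
  have quad : ∀ k0 k1 k2 k3 k4 k5 n0 n1 n2 : ℝ, (∀ x y : ℝ, k0 + k1 * x + k2 * y + k3 * x ^ 2
      + k4 * (x * y) + k5 * y ^ 2 = n0 + n1 * x + n2 * y) → k3 = 0 ∧ k4 = 0 ∧ k5 = 0 := by
    intro k0 k1 k2 k3 k4 k5 n0 n1 n2 h
    have h1 := h 0 0
    have h2 := h 1 0
    have h3 := h (-1) 0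
    have h4 := h 0 1
    have h5 := h 0 (-1)
    have h6 := h 1 1
    refine ⟨?_, ?_, ?_⟩ <;> linarith
  have Q : ∀ (a b : Fin 10 → ℝ) (n0 n1 n2 : ℝ),
      (∀ x : Fin 2 → ℝ, pd2 0 (fun x => AW.cub a (x 0) (x 1)) x
      + pd2 1 (fun x => AW.cub b (x 0) (x 1)) x = n0 + n1 * x 0 + n2 * x 1) →
      3 * a 6 + b 7 = 0 ∧ a 7 + b 8 = 0 ∧ a 8 + 3 * b 9 = 0 := by
    intro a b n0 n1 n2 h
    obtain ⟨h1, h2, h3⟩ := quad (a 1 + b 2) (2 * a 3 + b 4) (a 4 + 2 * b 5) (3 * a 6 + b 7)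
      (2 * a 7 + 2 * b 8) (a 8 + 3 * b 9) n0 n1 n2 (by
        intro x y
        have := h ![x, y]
        rw [(AW.pd2_cub0 a _).1, (AW.pd2_cub0 b _).2] at this
        simp only [Matrix.cons_val_zero, Matrix.cons_val_one] at this
        linarith)
    exact ⟨h1, by linarith, h3⟩
  obtain ⟨d1, d2, d3⟩ := Q a b _ _ _ (fun x => (D1 x).trans
    (show _ = (p 0 * r 1 - r 0 * p 1) * (r 1 * l0 - r 0 * m0)
      + (p 0 * r 1 - r 0 * p 1) * (r 1 * l1 - r 0 * m1) * x 0
      + (p 0 * r 1 - r 0 * p 1) * (r 1 * l2 - r 0 * m2) * x 1 by ring))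
  obtain ⟨d4, d5, d6⟩ := Q b c _ _ _ (fun x => (D2 x).trans
    (show _ = (p 0 * r 1 - r 0 * p 1) * (p 0 * m0 - p 1 * l0)
      + (p 0 * r 1 - r 0 * p 1) * (p 0 * m1 - p 1 * l1) * x 0
      + (p 0 * r 1 - r 0 * p 1) * (p 0 * m2 - p 1 * l2) * x 1 by ring))
  -- vertices
  have F0 : AW.F o p r ![0, 0] = v 0 := by
    rw [ho]; funext i; simp [AW.F]
  have F1 : AW.F o p r ![1, 0] = v 1 := by
    rw [hp0]; funext i; simp [AW.F]
  have F2 : AW.F o p r ![0, 1] = v 2 := by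
    rw [hr0]; funext i; simp [AW.F]
  have V : ∀ (e : Fin 10 → ℝ) (A B C : ℝ), (∀ x : Fin 2 → ℝ, AW.cub e (x 0) (x 1)
      = A * τ (AW.F o p r x) 0 0 + B * τ (AW.F o p r x) 0 1 + C * τ (AW.F o p r x) 1 1) →
      AW.cub e 0 0 = 0 ∧ AW.cub e 1 0 = 0 ∧ AW.cub e 0 1 = 0 := by
    intro e A B C h
    have g0 := h ![0, 0]
    have g1 := h ![1, 0]
    have g2 := h ![0, 1]
    rw [F0, ha] at g0
    rw [F1, ha] at g1
    rw [F2, ha] at g2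
    simp at g0 g1 g2
    exact ⟨g0, g1, g2⟩
  obtain ⟨va0, va1, va2⟩ := V a _ _ _ hA
  obtain ⟨vb0, vb1, vb2⟩ := V b _ _ _ hB
  obtain ⟨vc0, vc1, vc2⟩ := V c _ _ _ hC
  -- edges
  have E1 : ∀ t : ℝ, (1 - t) • v 0 + t • v 1 = AW.F o p r ![t, 0] := by
    intro t; rw [hp0, ho]; funext i; simp [AW.F]; ring
  have E2 : ∀ t : ℝ, (1 - t) • v 0 + t • v 2 = AW.F o p r ![0, t] := by
    intro t; rw [hr0, ho]; funext i; simp [AW.F]; ring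
  have E3 : ∀ t : ℝ, (1 - t) • v 1 + t • v 2 = AW.F o p r ![1 - t, t] := by
    intro t; rw [hr0, hp0]; funext i; simp [AW.F]; ring
  have n1 : (![-p 1, p 0] : Fin 2 → ℝ) ≠ 0 := by
    intro h
    have g0 := congrFun h 0
    have g1 := congrFun h 1
    simp at g0 g1
    apply hd; rw [g0, g1]; ring
  have n2 : (![r 1, -r 0] : Fin 2 → ℝ) ≠ 0 := by
    intro h
    have g0 := congrFun h 0
    have g1 := congrFun h 1
    simp at g0 g1
    apply hd; rw [g0, g1]; ring
  have n3 : (![r 1 - p 1, p 0 - r 0] : Fin 2 → ℝ) ≠ 0 := by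
    intro h
    have g0 := congrFun h 0
    have g1 := congrFun h 1
    simp at g0 g1
    apply hd; linear_combination p 0 * g0 + p 1 * g1
  have o1 : (∑ k, (![-p 1, p 0] : Fin 2 → ℝ) k * (v 1 - v 0) k) = 0 := by
    rw [ho, hp]; simp [Fin.sum_univ_two]; ring
  have o2 : (∑ k, (![r 1, -r 0] : Fin 2 → ℝ) k * (v 2 - v 0) k) = 0 := by
    rw [ho, hr]; simp [Fin.sum_univ_two]; ring
  have o3 : (∑ k, (![r 1 - p 1, p 0 - r 0] : Fin 2 → ℝ) k * (v 2 - v 1) k) = 0 := by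
    rw [hr0, hp0]; simp [Fin.sum_univ_two]; ring
  have hAB : ∀ x : Fin 2 → ℝ, AW.cub (a + b) (x 0) (x 1) = _ := fun x => by
    rw [AW.cub_add, hA, hB]
  have hBC : ∀ x : Fin 2 → ℝ, AW.cub (b + c) (x 0) (x 1) = _ := fun x => by
    rw [AW.cub_add, hB, hC]
  obtain ⟨e1, e2⟩ := hedge 0 1 (by decide) _ n1 o1 (r 1) (-r 0) (fun t => AW.cub b t 0) (by
    rintro t _ rfl
    rw [E1]
    refine Eq.trans ?_ (hB ![t, 0]).symm
    simp only [Matrix.cons_val_zero, Matrix.cons_val_one]; ring)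
  obtain ⟨e3, e4⟩ := hedge 0 1 (by decide) _ n1 o1 (-p 1) (p 0) (fun t => AW.cub c t 0) (by
    rintro t _ rfl
    rw [E1]
    refine Eq.trans ?_ (hC ![t, 0]).symm
    simp only [Matrix.cons_val_zero, Matrix.cons_val_one]; ring)
  obtain ⟨e5, e6⟩ := hedge 0 2 (by decide) _ n2 o2 (r 1) (-r 0) (fun t => AW.cub a 0 t) (by
    rintro t _ rfl
    rw [E2]
    refine Eq.trans ?_ (hA ![0, t]).symm
    simp only [Matrix.cons_val_zero, Matrix.cons_val_one]; ring)
  obtain ⟨e7, e8⟩ := hedge 0 2 (by decide) _ n2 o2 (-p 1) (p 0) (fun t => AW.cub b 0 t) (by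
    rintro t _ rfl
    rw [E2]
    refine Eq.trans ?_ (hB ![0, t]).symm
    simp only [Matrix.cons_val_zero, Matrix.cons_val_one]; ring)
  obtain ⟨e9, e10⟩ := hedge 1 2 (by decide) _ n3 o3 (r 1) (-r 0)
    (fun t => AW.cub (a + b) (1 - t) t) (by
    rintro t _ rfl
    rw [E3]
    refine Eq.trans ?_ (hAB ![1 - t, t]).symm
    simp only [Matrix.cons_val_zero, Matrix.cons_val_one]; ring)
  obtain ⟨e11, e12⟩ := hedge 1 2 (by decide) _ n3 o3 (-p 1) (p 0)
    (fun t => AW.cub (b + c) (1 - t) t) (by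
    rintro t _ rfl
    rw [E3]
    refine Eq.trans ?_ (hBC ![1 - t, t]).symm
    simp only [Matrix.cons_val_zero, Matrix.cons_val_one]; ring)
  obtain ⟨za, zb, zc⟩ := AW.ref_solve a b c d1 d2 d3 d4 d5 d6 va0 va1 va2 vb0 vb1 vb2 vc0 vc1 vc2
    e1 e2 e3 e4 e5 e6 e7 e8 e9 e10 e11 e12
    (hmean _ _ _ a fun x => (hA x).symm) (hmean _ _ _ b fun x => (hB x).symm)
    (hmean _ _ _ c fun x => (hC x).symm)
  intro y
  obtain ⟨x, rfl⟩ := AW.F_inv o p r hd y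
  have zA := hA x
  have zB := hB x
  have zC := hC x
  have zz : ∀ s t : ℝ, AW.cub 0 s t = 0 := by intro s t; simp [AW.cub]
  rw [za, zz] at zA
  rw [zb, zz] at zB
  rw [zc, zz] at zC
  have hd2 : (p 0 * r 1 - r 0 * p 1) ^ 2 ≠ 0 := pow_ne_zero 2 hd
  have t00 : τ (AW.F o p r x) 0 0 = 0 := by
    apply (mul_eq_zero.mp _).resolve_left hd2
    linear_combination -(p 0 ^ 2) * zA - 2 * p 0 * r 0 * zB - r 0 ^ 2 * zC
  have t01 : τ (AW.F o p r x) 0 1 = 0 := by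
    apply (mul_eq_zero.mp _).resolve_left hd2
    linear_combination -(p 0 * p 1) * zA - (p 0 * r 1 + p 1 * r 0) * zB - r 0 * r 1 * zC
  have t11 : τ (AW.F o p r x) 1 1 = 0 := by
    apply (mul_eq_zero.mp _).resolve_left hd2
    linear_combination -(p 1 ^ 2) * zA - 2 * p 1 * r 1 * zB - r 1 ^ 2 * zC
  ext i j
  fin_cases i <;> fin_cases j
  · exact t00
  · exact t01
  · exact (hs _).trans t01
  · exact t11
end

section
/- Let Ω ⊆ ℝ³ be a nonempty convex open set and let F : ℝ³ → ℝ³ be continuously differentiable on Ω with curl F = 0 on Ω, i.e., ∂₂F₃ = ∂₃F₂, ∂₃F₁ = ∂₁F₃, and ∂₁F₂ = ∂₂F₁ on Ω. Then there exists a differentiable function f : ℝ³ → ℝ such that F = grad f on Ω, i.e., Fᵢ = ∂ᵢf on Ω for i = 1, 2, 3. -/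
/-- The `i`-th partial derivative of a scalar function on `ℝ³`. -/
noncomputable def pd (i : Fin 3) (f : (Fin 3 → ℝ) → ℝ) (x : Fin 3 → ℝ) : ℝ :=
  fderiv ℝ f x (Pi.single i 1)

/-- Exactness of the de Rham complex at the first stage on a convex domain: every
`C¹` curl-free vector field on a nonempty convex open set `Ω ⊆ ℝ³` is a gradient. -/
theorem curl_free_is_gradient_on_convex
    (Ω : Set (Fin 3 → ℝ)) (hne : Ω.Nonempty) (hconv : Convex ℝ Ω) (hΩ : IsOpen Ω)
    (F : (Fin 3 → ℝ) → Fin 3 → ℝ) (hF : ContDiffOn ℝ 1 F Ω)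
    (h1 : ∀ x ∈ Ω, pd 1 (fun y => F y 2) x = pd 2 (fun y => F y 1) x)
    (h2 : ∀ x ∈ Ω, pd 2 (fun y => F y 0) x = pd 0 (fun y => F y 2) x)
    (h3 : ∀ x ∈ Ω, pd 0 (fun y => F y 1) x = pd 1 (fun y => F y 0) x) :
    ∃ f : (Fin 3 → ℝ) → ℝ, DifferentiableOn ℝ f Ω ∧
      ∀ x ∈ Ω, ∀ i : Fin 3, F x i = pd i f x := by
  have hd : ∀ a ∈ Ω, ∀ i, DifferentiableAt ℝ (fun y => F y i) a := fun a ha i =>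
    differentiableAt_pi.1 ((hF.differentiableOn one_ne_zero).differentiableAt (hΩ.mem_nhds ha)) i
  let P : Fin 3 → ((Fin 3 → ℝ) →L[ℝ] ℝ) := fun i => ContinuousLinearMap.proj i
  have hω : ∀ a ∈ Ω, HasFDerivAt (fun x => ∑ i, F x i • P i)
      (∑ i, (fderiv ℝ (fun y => F y i) a).smulRight (P i)) a := fun a ha =>
    HasFDerivAt.fun_sum fun i _ => (hd a ha i).hasFDerivAt.smul_const (P i)
  have hexp : ∀ (L : (Fin 3 → ℝ) →L[ℝ] ℝ) (x : Fin 3 → ℝ),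
      L x = x 0 * L (Pi.single 0 1) + x 1 * L (Pi.single 1 1) + x 2 * L (Pi.single 2 1) := by
    intro L x
    have hx : x = x 0 • Pi.single 0 1 + x 1 • Pi.single 1 1 + x 2 • Pi.single 2 1 := by
      ext j
      fin_cases j <;> simp
    conv_lhs => rw [hx]
    simp only [map_add, map_smul, smul_eq_mul]
  obtain ⟨f, hf⟩ := hconv.exists_forall_hasFDerivAt_of_fderiv_symmetric hΩ
    (fun a ha => (hω a ha).differentiableAt.differentiableWithinAt) (by
      intro a ha x y
      rw [(hω a ha).fderiv]
      have e1 := h1 a ha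
      have e2 := h2 a ha
      have e3 := h3 a ha
      simp only [pd] at e1 e2 e3
      simp only [Fin.sum_univ_three, ContinuousLinearMap.add_apply,
        ContinuousLinearMap.smulRight_apply, ContinuousLinearMap.smul_apply, smul_eq_mul, P,
        ContinuousLinearMap.proj_apply]
      simp only [hexp _ x, hexp _ y, e1, e2, e3]
      ring)
  refine ⟨f, fun a ha => (hf a ha).differentiableAt.differentiableWithinAt, fun x hx i => ?_⟩
  rw [pd, (hf x hx).fderiv]
  fin_cases i <;> simp [Fin.sum_univ_three, P]
end
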